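/- arXiv:1501.00397 — 5 statements merged into one kernel-verified Lean document; each statement's English description precedes it below -/
import Mathlib

section
/- Let q be a prime power and n ≥ 3 an integer with not (n = 3 and q = 4). Then there exists a primitive element α of F_{q^n} with Tr_{q^n|q}(α) = 0. -/
/-- `α` is a primitive element of the finite field `E`: it generates the multiplicative
group `Eˣ`. -/
def IsPrimitiveElem {E : Type*} [Field E] (α : E) : Prop :=
  ∀ x : E, x ≠ 0 → ∃ k : ℕ, α ^ k = x

/-!
Replace "primitive" by a condition that scaling by `F` can repair: if `x ≠ 0` has trace zero and
is not a `p`-th power for any prime `p ∣ v = (q ^ n - 1) / (q - 1)`, then some `F`-multiple of `x`,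
again of trace zero, is primitive. A sieve produces such `x` in the trace-zero hyperplane: over it
the sum of a nontrivial multiplicative character vanishes or is a Gauss sum up to scaling, so it has
absolute value at most `(q - 1) * q ^ (n / 2 - 1)`, while the hyperplane has `q ^ (n - 1) - 1`
nonzero elements. The resulting inequality in `q` and `n` holds for large `q ^ n` because `v` has
few prime divisors, and for the remaining pairs by computation, except when `(q, n)` is `(5, 4)` or
`(16, 3)`. There, `x` has trace zero iff `y = x ^ (q - 1)` is a root of
`∑ i < n, Y ^ ((q ^ i - 1) / (q - 1))`, and suitable roots are found by factoring this polynomial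
over the prime field.
-/

open Finset
open scoped Function

section TraceZero

lemma norm_gaussSum {R : Type*} [Field R] [Fintype R] {χ : MulChar R ℂ} (hχ : χ ≠ 1)
    {ψ : AddChar R ℂ} (hψ : ψ.IsPrimitive) : ‖gaussSum χ ψ‖ = √(Fintype.card R) := by
  have h : gaussSum χ ψ * star (gaussSum χ ψ) = Fintype.card R := by
    rw [star_gaussSum_eq, gaussSum_mul_gaussSum_eq_card hχ hψ]
  rw [Complex.star_def, Complex.mul_conj'] at h
  rw [← Real.sqrt_sq (norm_nonneg _)]
  congr 1
  exact_mod_cast h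

variable (F E : Type*) [Field F] [Field E] [Algebra F E]

/-- The nonzero elements of `E` whose trace over `F` vanishes. -/
noncomputable def nonzeroTraceZero [Finite E] : Finset E :=
  (Set.toFinite {x : E | x ≠ 0 ∧ Algebra.trace F E x = 0}).toFinset

variable {F E}

lemma mem_nonzeroTraceZero [Finite E] {x : E} :
    x ∈ nonzeroTraceZero F E ↔ x ≠ 0 ∧ Algebra.trace F E x = 0 := by
  simp [nonzeroTraceZero]

lemma card_mul_sum_nonzeroTraceZero [Fintype F] [Fintype E] {ψ : AddChar F ℂ}
    (hψ : ψ.IsPrimitive) (χ : MulChar E ℂ) :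
    Fintype.card F * ∑ x ∈ nonzeroTraceZero F E, χ x =
      ∑ c : F, gaussSum χ (AddChar.mulShift
        (ψ.compAddMonoidHom (Algebra.trace F E).toAddMonoidHom) (algebraMap F E c)) := by
  classical
  have orthogonality (x : E) : (∑ c : F, ψ (c * Algebra.trace F E x)) * χ x =
      if x ∈ nonzeroTraceZero F E then Fintype.card F * χ x else 0 := by
    rw [AddChar.sum_mulShift _ hψ]
    rcases eq_or_ne x 0 with rfl | hx
    · simp [MulChar.map_zero]
    · simp [mem_nonzeroTraceZero, hx]
  calc Fintype.card F * ∑ x ∈ nonzeroTraceZero F E, χ x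
      = ∑ x, (∑ c : F, ψ (c * Algebra.trace F E x)) * χ x := by
        simp_rw [orthogonality, mul_sum, sum_ite_mem, univ_inter]
    _ = ∑ c : F, ∑ x, χ x * ψ (c * Algebra.trace F E x) := by
        simp_rw [sum_mul, mul_comm (ψ _)]
        exact sum_comm
    _ = _ := by
        simp [gaussSum, AddChar.mulShift_apply, ← Algebra.smul_def]

lemma isPrimitive_compAddMonoidHom_trace [Finite E] {ψ : AddChar F ℂ} (hψ : ψ ≠ 1) :
    (ψ.compAddMonoidHom (Algebra.trace F E).toAddMonoidHom).IsPrimitive := by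
  refine AddChar.IsPrimitive.of_ne_one fun h ↦ ?_
  obtain ⟨a, ha⟩ := AddChar.ne_one_iff.mp hψ
  obtain ⟨x, rfl⟩ := Algebra.trace_surjective F E a
  exact ha (DFunLike.congr_fun h x)

lemma norm_sum_nonzeroTraceZero_le [Fintype F] [Fintype E] {χ : MulChar E ℂ} (hχ : χ ≠ 1) :
    ‖∑ x ∈ nonzeroTraceZero F E, χ x‖ ≤
      (Fintype.card F - 1) * √(Fintype.card E) / Fintype.card F := by
  classical
  have hψ := AddChar.FiniteField.primitiveChar_to_Complex_isPrimitive F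
  set ψ := AddChar.FiniteField.primitiveChar_to_Complex F
  have hψ1 : ψ ≠ 1 := fun h ↦ hψ one_ne_zero ((AddChar.mulShift_one ψ).trans h)
  have hΨ := isPrimitive_compAddMonoidHom_trace (E := E) hψ1
  have sum_eq := card_mul_sum_nonzeroTraceZero (E := E) hψ χ
  have norm_term (c : F) (hc : c ∈ univ.erase 0) : ‖gaussSum χ (AddChar.mulShift
      (ψ.compAddMonoidHom (Algebra.trace F E).toAddMonoidHom) (algebraMap F E c))‖
      = √(Fintype.card E) :=
    norm_gaussSum hχ (AddChar.IsPrimitive.of_ne_one (hΨ (by simpa using hc)))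
  rw [← add_sum_erase _ _ (mem_univ 0), map_zero, AddChar.mulShift_zero,
    gaussSum_one_right hχ, zero_add] at sum_eq
  rw [le_div_iff₀' (by exact_mod_cast Fintype.card_pos)]
  calc Fintype.card F * ‖∑ x ∈ nonzeroTraceZero F E, χ x‖
      = ‖∑ c ∈ univ.erase (0 : F), _‖ := by rw [← sum_eq, norm_mul, Complex.norm_natCast]
    _ ≤ _ := norm_sum_le _ _
    _ = (Fintype.card F - 1) * √(Fintype.card E) := by
      rw [sum_congr rfl norm_term, sum_const, card_erase_of_mem (mem_univ _), card_univ,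
        nsmul_eq_mul, Nat.cast_sub Fintype.card_pos, Nat.cast_one]

lemma card_nonzeroTraceZero [Fintype F] [Finite E] :
    #(nonzeroTraceZero F E) = Fintype.card F ^ (Module.finrank F E - 1) - 1 := by
  classical
  have := Fintype.ofFinite E
  have rank : Module.finrank F (LinearMap.ker (Algebra.trace F E)) = Module.finrank F E - 1 := by
    have := (Algebra.trace F E).finrank_range_add_finrank_ker
    rw [LinearMap.range_eq_top.mpr (Algebra.trace_surjective F E), finrank_top,
      Module.finrank_self] at this
    omega
  have ker : nonzeroTraceZero F E =
      ((LinearMap.ker (Algebra.trace F E) : Set E).toFinset).erase 0 := by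
    ext x; simp [mem_nonzeroTraceZero]
  rw [ker, card_erase_of_mem (by simp), Set.toFinset_card, ← rank]
  congr 1
  exact Module.card_eq_pow_finrank

end TraceZero

section CharacterSieve

variable {M : Type*} [CommMonoid M]

/-- The weight `h` supported on the nontrivial powers of `χ` for which the indicator of `χ x ≠ 1`
is `(1 - 1 / orderOf χ) * (1 + h x)`. -/
noncomputable def sieveWeight (χ : MulChar M ℂ) (x : M) : ℂ :=
  -((orderOf χ : ℂ) - 1)⁻¹ * ∑ t ∈ Ico 1 (orderOf χ), (χ ^ t) x

lemma one_sub_mul_one_add_sieveWeight {χ : MulChar M ℂ} (hχ : 1 < orderOf χ) {x : M}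
    (hx : IsUnit x) [Decidable (χ x = 1)] :
    (1 - (orderOf χ : ℂ)⁻¹) * (1 + sieveWeight χ x) = if χ x = 1 then 0 else 1 := by
  have h0 : (orderOf χ : ℂ) ≠ 0 := by exact_mod_cast (zero_lt_one.trans hχ).ne'
  have h1 : (orderOf χ : ℂ) - 1 ≠ 0 := sub_ne_zero.mpr (by exact_mod_cast hχ.ne')
  have sum_pow : ∑ t ∈ Ico 1 (orderOf χ), (χ ^ t) x =
      (if χ x = 1 then (orderOf χ : ℂ) else 0) - 1 := by
    have hpow : χ x ^ orderOf χ = 1 := by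
      obtain ⟨u, rfl⟩ := hx
      rw [← MulChar.pow_apply_coe, pow_orderOf_eq_one, MulChar.one_apply_coe]
    have hgeom : ∑ t ∈ range (orderOf χ), χ x ^ t = if χ x = 1 then (orderOf χ : ℂ) else 0 := by
      split_ifs with h
      · simp [h]
      · rw [geom_sum_eq h, hpow, sub_self, zero_div]
    rw [← hgeom, range_eq_Ico, sum_eq_sum_Ico_succ_bot (zero_lt_one.trans hχ), pow_zero,
      add_sub_cancel_left]
    exact sum_congr rfl fun t ht ↦ MulChar.pow_apply' _ (by grind) _
  rw [sieveWeight, sum_pow]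
  split_ifs <;> field_simp <;> ring

variable {ι : Type*} {ψ : ι → MulChar M ℂ} {A : Finset M} {B : ℝ}

lemma mul_pow_ne_one_of_coprime_orderOf {G : Type*} [CommGroup G] {a b : G}
    (hcop : (orderOf a).Coprime (orderOf b)) {t : ℕ} (ht : t ∈ Ico 1 (orderOf b)) :
    a * b ^ t ≠ 1 := by
  rw [mem_Ico] at ht
  intro h
  have ha : orderOf a ∣ orderOf b := by
    rw [eq_inv_of_mul_eq_one_left h, orderOf_inv]
    exact orderOf_pow_dvd t
  have ha1 : a = 1 := orderOf_eq_one_iff.mp (hcop.eq_one_of_dvd ha)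
  rw [ha1, one_mul] at h
  exact pow_ne_one_of_lt_orderOf (by omega) ht.2 h

lemma norm_sum_mul_prod_sieveWeight_le (hB : ∀ χ : MulChar M ℂ, χ ≠ 1 → ‖∑ x ∈ A, χ x‖ ≤ B)
    {T : Finset ι} (hord : ∀ i ∈ T, 1 < orderOf (ψ i))
    (hcop : (T : Set ι).Pairwise (Nat.Coprime on fun i ↦ orderOf (ψ i)))
    {χ : MulChar M ℂ} (hχ : ∀ i ∈ T, (orderOf χ).Coprime (orderOf (ψ i)))
    (hne : χ ≠ 1 ∨ T.Nonempty) :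
    ‖∑ x ∈ A, χ x * ∏ i ∈ T, sieveWeight (ψ i) x‖ ≤ B := by
  classical
  induction T using Finset.induction_on generalizing χ with
  | empty => simpa using hB χ (by simpa using hne)
  | insert i T hi ih =>
    simp only [mem_insert, forall_eq_or_imp] at hord hχ
    rw [coe_insert, Set.pairwise_insert_of_notMem (by simpa using hi)] at hcop
    set n := orderOf (ψ i)
    have hn : (0 : ℝ) < n - 1 := sub_pos.mpr (by exact_mod_cast hord.1)
    have expand : ∑ x ∈ A, χ x * ∏ j ∈ insert i T, sieveWeight (ψ j) x = -((n : ℂ) - 1)⁻¹ *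
        ∑ t ∈ Ico 1 n, ∑ x ∈ A, (χ * ψ i ^ t) x * ∏ j ∈ T, sieveWeight (ψ j) x := by
      simp_rw [prod_insert hi, sieveWeight.eq_1 (ψ i), MulChar.mul_apply]
      rw [sum_comm, mul_sum]
      refine sum_congr rfl fun x _ ↦ ?_
      rw [← sum_mul, ← mul_sum]
      ring
    have bound (t : ℕ) (ht : t ∈ Ico 1 n) :
        ‖∑ x ∈ A, (χ * ψ i ^ t) x * ∏ j ∈ T, sieveWeight (ψ j) x‖ ≤ B := by
      refine ih hord.2 hcop.1 (fun j hj ↦ ?_) (.inl (mul_pow_ne_one_of_coprime_orderOf hχ.1 ht))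
      refine Nat.Coprime.of_dvd_left (Commute.all _ _).orderOf_mul_dvd_mul_orderOf
        ((hχ.2 j hj).mul_left ?_)
      exact (hcop.2 j hj).1.of_dvd_left (orderOf_pow_dvd t)
    have norm_const : ‖-((n : ℂ) - 1)⁻¹‖ = ((n : ℝ) - 1)⁻¹ := by
      rw [norm_neg, norm_inv, ← Complex.ofReal_natCast, ← Complex.ofReal_one, ← Complex.ofReal_sub,
        Complex.norm_of_nonneg hn.le]
    rw [expand, norm_mul, norm_const, inv_mul_le_iff₀ hn]
    refine (norm_sum_le_of_le _ bound).trans_eq ?_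
    rw [sum_const, Nat.card_Ico, nsmul_eq_mul, Nat.cast_sub hord.1.le, Nat.cast_one]

variable (ψ A) in
open Classical in
/-- The elements of `A` surviving the sieve by the characters `ψ i` with `i ∈ K`. -/
noncomputable def sifted (K : Finset ι) : Finset M := {x ∈ A | ∀ i ∈ K, ψ i x ≠ 1}

variable (ψ) in
/-- The expected proportion of elements surviving the sieve by the characters `ψ i`, `i ∈ K`. -/
noncomputable def siftedDensity (K : Finset ι) : ℝ := ∏ i ∈ K, (1 - (orderOf (ψ i) : ℝ)⁻¹)

lemma siftedDensity_pos {K : Finset ι} (hord : ∀ i ∈ K, 1 < orderOf (ψ i)) :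
    0 < siftedDensity ψ K :=
  prod_pos fun i hi ↦ sub_pos.mpr (inv_lt_one_of_one_lt₀ (by exact_mod_cast hord i hi))

lemma card_sifted (hA : ∀ x ∈ A, IsUnit x) {K : Finset ι} (hord : ∀ i ∈ K, 1 < orderOf (ψ i)) :
    (#(sifted ψ A K) : ℂ) =
      siftedDensity ψ K * ∑ T ∈ K.powerset, ∑ x ∈ A, ∏ i ∈ T, sieveWeight (ψ i) x := by
  classical
  have indicator (x : M) (hx : x ∈ A) : (if ∀ i ∈ K, ψ i x ≠ 1 then (1 : ℂ) else 0) =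
      siftedDensity ψ K * ∑ T ∈ K.powerset, ∏ i ∈ T, sieveWeight (ψ i) x := by
    rw [← prod_one_add, siftedDensity]
    push_cast
    rw [← prod_mul_distrib, prod_congr rfl fun i hi ↦
      one_sub_mul_one_add_sieveWeight (hord i hi) (hA x hx)]
    simp_rw [← ite_not (ψ _ x = 1), prod_ite_zero, prod_const_one]
  rw [sifted, card_filter]
  push_cast
  rw [sum_congr rfl indicator, ← mul_sum, sum_comm]

lemma norm_sum_prod_sieveWeight_le (hA : ∀ x ∈ A, IsUnit x)
    (hB : ∀ χ : MulChar M ℂ, χ ≠ 1 → ‖∑ x ∈ A, χ x‖ ≤ B)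
    {T : Finset ι} (hord : ∀ i ∈ T, 1 < orderOf (ψ i))
    (hcop : (T : Set ι).Pairwise (Nat.Coprime on fun i ↦ orderOf (ψ i))) (hT : T.Nonempty) :
    ‖∑ x ∈ A, ∏ i ∈ T, sieveWeight (ψ i) x‖ ≤ B := by
  convert norm_sum_mul_prod_sieveWeight_le hB hord hcop (χ := 1) (by simp) (.inr hT) using 2
  exact sum_congr rfl fun x hx ↦ by rw [MulChar.one_apply (hA x hx), one_mul]

lemma siftedDensity_mul_le_card_sifted (hA : ∀ x ∈ A, IsUnit x)
    (hB : ∀ χ : MulChar M ℂ, χ ≠ 1 → ‖∑ x ∈ A, χ x‖ ≤ B)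
    {K : Finset ι} (hord : ∀ i ∈ K, 1 < orderOf (ψ i))
    (hcop : (K : Set ι).Pairwise (Nat.Coprime on fun i ↦ orderOf (ψ i))) :
    siftedDensity ψ K * (#A - B * (2 ^ #K - 1)) ≤ #(sifted ψ A K) := by
  classical
  have main_add_error := card_sifted hA hord
  rw [← add_sum_erase _ _ (empty_mem_powerset K)] at main_add_error
  set error := ∑ T ∈ K.powerset.erase ∅, ∑ x ∈ A, ∏ i ∈ T, sieveWeight (ψ i) x
  have norm_error : ‖error‖ ≤ B * (2 ^ #K - 1) := by
    refine (norm_sum_le_of_le (n := fun _ ↦ B) _ fun T hT ↦ ?_).trans_eq ?_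
    · rw [mem_erase, mem_powerset, ← nonempty_iff_ne_empty] at hT
      exact norm_sum_prod_sieveWeight_le hA hB (fun i hi ↦ hord i (hT.2 hi))
        (hcop.mono (by exact_mod_cast hT.2)) hT.1
    · rw [sum_const, card_erase_of_mem (empty_mem_powerset K), card_powerset, nsmul_eq_mul,
        Nat.cast_sub Nat.one_le_two_pow]
      push_cast
      ring
  have hre := congrArg Complex.re main_add_error
  simp only [prod_empty, sum_const, nsmul_eq_mul, mul_one, Complex.natCast_re,
    Complex.re_ofReal_mul, Complex.add_re] at hre
  rw [hre]
  refine mul_le_mul_of_nonneg_left ?_ (siftedDensity_pos hord).le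
  linarith [neg_le_of_abs_le (Complex.abs_re_le_norm error)]

variable [DecidableEq ι]

lemma card_sifted_sub_card_sifted_insert_le (hA : ∀ x ∈ A, IsUnit x)
    (hB : ∀ χ : MulChar M ℂ, χ ≠ 1 → ‖∑ x ∈ A, χ x‖ ≤ B)
    {K : Finset ι} {j : ι} (hj : j ∉ K) (hord : ∀ i ∈ insert j K, 1 < orderOf (ψ i))
    (hcop : (insert j K : Set ι).Pairwise (Nat.Coprime on fun i ↦ orderOf (ψ i))) :
    (#(sifted ψ A K) - #(sifted ψ A (insert j K)) : ℝ) ≤ #(sifted ψ A K) * (orderOf (ψ j) : ℝ)⁻¹ +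
      siftedDensity ψ K * (1 - (orderOf (ψ j) : ℝ)⁻¹) * (B * 2 ^ #K) := by
  have hordK : ∀ i ∈ K, 1 < orderOf (ψ i) := fun i hi ↦ hord i (mem_insert_of_mem hi)
  set error := ∑ T ∈ K.powerset, ∑ x ∈ A, ∏ i ∈ insert j T, sieveWeight (ψ i) x
  have norm_error : ‖error‖ ≤ B * 2 ^ #K := by
    refine (norm_sum_le_of_le (n := fun _ ↦ B) _ fun T hT ↦ ?_).trans_eq ?_
    · have hTK := insert_subset_insert j (mem_powerset.mp hT)
      exact norm_sum_prod_sieveWeight_le hA hB (fun i hi ↦ hord i (hTK hi))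
        (hcop.mono (by exact_mod_cast hTK)) (insert_nonempty j T)
    · rw [sum_const, card_powerset, nsmul_eq_mul]
      push_cast
      ring
  have density_insert :
      siftedDensity ψ (insert j K) = (1 - (orderOf (ψ j) : ℝ)⁻¹) * siftedDensity ψ K :=
    prod_insert hj
  have split : (#(sifted ψ A (insert j K)) : ℂ) = (1 - (orderOf (ψ j) : ℝ)⁻¹ : ℝ) *
      #(sifted ψ A K) + (siftedDensity ψ K * (1 - (orderOf (ψ j) : ℝ)⁻¹) : ℝ) * error := by
    rw [card_sifted hA hord, card_sifted hA hordK, sum_powerset_insert hj, density_insert]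
    push_cast
    ring
  have hre := congrArg Complex.re split
  simp only [Complex.add_re, Complex.re_ofReal_mul, Complex.natCast_re] at hre
  have hdensity : 0 ≤ siftedDensity ψ K * (1 - (orderOf (ψ j) : ℝ)⁻¹) := by
    rw [mul_comm, ← density_insert]
    exact (siftedDensity_pos hord).le
  have herror := mul_le_mul_of_nonneg_left
    ((neg_le_abs _).trans ((Complex.abs_re_le_norm error).trans norm_error)) hdensity
  linarith

lemma card_sifted_le_card_sifted_union_add_sum (K S : Finset ι) :
    #(sifted ψ A K) ≤
      #(sifted ψ A (K ∪ S)) + ∑ j ∈ S, (#(sifted ψ A K) - #(sifted ψ A (insert j K))) := by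
  classical
  have hsub (j : ι) : sifted ψ A (insert j K) ⊆ sifted ψ A K := by grind [sifted]
  simp_rw [← card_sdiff_of_subset (hsub _)]
  refine le_trans (card_le_card fun x hx ↦ ?_)
    ((card_union_le _ (S.biUnion fun j ↦ sifted ψ A K \ sifted ψ A (insert j K))).trans
      (Nat.add_le_add_left card_biUnion_le _))
  grind [sifted]

theorem sifted_union_nonempty (hA : ∀ x ∈ A, IsUnit x)
    (hB : ∀ χ : MulChar M ℂ, χ ≠ 1 → ‖∑ x ∈ A, χ x‖ ≤ B)
    {K S : Finset ι} (hKS : Disjoint K S) (hord : ∀ i ∈ K ∪ S, 1 < orderOf (ψ i))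
    (hcop : (K ∪ S : Set ι).Pairwise (Nat.Coprime on fun i ↦ orderOf (ψ i)))
    {δ : ℝ} (hδ : δ = 1 - ∑ j ∈ S, (orderOf (ψ j) : ℝ)⁻¹) (hδ0 : 0 < δ)
    (hlt : B * (2 ^ #K * ((#S - 1) / δ + 2) - 1) < #A) :
    (sifted ψ A (K ∪ S)).Nonempty := by
  have hordK : ∀ i ∈ K, 1 < orderOf (ψ i) := fun i hi ↦ hord i (mem_union_left S hi)
  set N : ℝ := (#(sifted ψ A K) : ℝ)
  set θ := siftedDensity ψ K
  have hθ : 0 < θ := siftedDensity_pos hordK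
  have base : θ * (#A - B * (2 ^ #K - 1)) ≤ N :=
    siftedDensity_mul_le_card_sifted hA hB hordK (hcop.mono Set.subset_union_left)
  have loss : ∑ j ∈ S, (N - #(sifted ψ A (insert j K))) ≤
      N * (1 - δ) + θ * (B * 2 ^ #K) * (#S - 1 + δ) := by
    have step (j : ι) (hj : j ∈ S) :=
      have hsub : insert j K ⊆ K ∪ S := insert_subset (mem_union_right K hj) subset_union_left
      card_sifted_sub_card_sifted_insert_le hA hB (disjoint_right.mp hKS hj)
        (fun i hi ↦ hord i (hsub hi)) (hcop.mono (by rwa [← coe_insert, ← coe_union, coe_subset]))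
    refine (sum_le_sum step).trans_eq ?_
    have : ∑ j ∈ S, (orderOf (ψ j) : ℝ)⁻¹ = 1 - δ := by rw [hδ]; ring
    simp_rw [sum_add_distrib, ← sum_mul, ← mul_sum, sum_sub_distrib, this, sum_const, nsmul_one]
    ring
  have survivors : N ≤ #(sifted ψ A (K ∪ S)) + ∑ j ∈ S, (N - #(sifted ψ A (insert j K))) := by
    have hle (j : ι) : #(sifted ψ A (insert j K)) ≤ #(sifted ψ A K) :=
      card_le_card (by grind [sifted])
    have := card_sifted_le_card_sifted_union_add_sum (ψ := ψ) (A := A) K S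
    have := (Nat.cast_le (α := ℝ)).mpr this
    simpa [Nat.cast_sub (hle _), N] using this
  have hpos : 0 < θ * δ * (#A - B * (2 ^ #K * ((#S - 1) / δ + 2) - 1)) := by
    have := sub_pos.mpr hlt
    positivity
  have expand : θ * δ * (#A - B * (2 ^ #K * ((#S - 1) / δ + 2) - 1)) =
      δ * (θ * (#A - B * (2 ^ #K - 1))) - θ * (B * 2 ^ #K) * (#S - 1 + δ) := by
    field_simp
    ring
  have : (0 : ℝ) < #(sifted ψ A (K ∪ S)) := by
    linarith [mul_le_mul_of_nonneg_left base hδ0.le]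
  exact card_pos.mp (by exact_mod_cast this)

end CharacterSieve

section Scaling

lemma exists_coprime_add_mul_of_dvd {k v N : ℕ} (hN : N ≠ 0) (hv : v ∣ N) (hk : k.Coprime v) :
    ∃ j, (k + v * j).Coprime N := by
  have : NeZero N := ⟨hN⟩
  obtain ⟨u, hu⟩ := ZMod.unitsMap_surjective hv (ZMod.unitOfCoprime k hk)
  have hmod : k ≡ (u : ZMod N).val + N * k [MOD v] := by
    rw [← ZMod.natCast_eq_natCast_iff, Nat.cast_add, Nat.cast_mul,
      (ZMod.natCast_eq_zero_iff N v).mpr hv, zero_mul, add_zero, ZMod.natCast_val,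
      ← ZMod.unitsMap_val hv, hu, ZMod.coe_unitOfCoprime]
  have hle : k ≤ (u : ZMod N).val + N * k :=
    (Nat.le_mul_of_pos_left k (Nat.pos_of_ne_zero hN)).trans (Nat.le_add_left _ _)
  obtain ⟨j, hj⟩ := (Nat.modEq_iff_dvd' hle).mp hmod
  refine ⟨j, ?_⟩
  rw [← hj, Nat.add_sub_cancel' hle, Nat.coprime_add_mul_left_left]
  exact ZMod.val_coe_unit_coprime u

lemma exists_orderOf_mul_pow_eq_natCard {G : Type*} [Group G] [Finite G] [IsCyclic G] {v : ℕ}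
    (hv : v ∣ Nat.card G) {x : G} (hx : ∀ p ∈ v.primeFactors, ∀ y : G, y ^ p ≠ x) :
    ∃ y : G, orderOf (x * y ^ v) = Nat.card G := by
  obtain ⟨g, hg⟩ := IsCyclic.exists_generator (α := G)
  have hgcard := orderOf_eq_card_of_forall_mem_zpowers hg
  obtain ⟨k, rfl⟩ := mem_powers_iff_mem_zpowers.mpr (hg x)
  have hcop : k.Coprime v := Nat.coprime_of_dvd fun p hp hpk hpv ↦ by
    obtain ⟨m, rfl⟩ := hpk
    have hv0 : v ≠ 0 := ne_zero_of_dvd_ne_zero Nat.card_pos.ne' hv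
    exact hx p (Nat.mem_primeFactors.mpr ⟨hp, hpv, hv0⟩) (g ^ m) (by rw [← pow_mul, mul_comm])
  obtain ⟨j, hj⟩ := exists_coprime_add_mul_of_dvd Nat.card_pos.ne' hv hcop
  refine ⟨g ^ j, ?_⟩
  rw [← hgcard] at hj ⊢
  rw [← pow_mul, mul_comm j, ← pow_add, hj.symm.orderOf_pow]

lemma isPrimitiveElem_of_orderOf_eq {E : Type*} [Field E] [Finite E] {u : Eˣ}
    (hu : orderOf u = Nat.card Eˣ) : IsPrimitiveElem (u : E) := fun x hx ↦ by
  have htop : Subgroup.zpowers u = ⊤ :=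
    Subgroup.eq_top_of_card_eq _ (by rw [Nat.card_zpowers, hu])
  obtain ⟨k, hk⟩ := mem_powers_iff_mem_zpowers.mpr (htop ▸ Subgroup.mem_top (Units.mk0 x hx))
  exact ⟨k, by simpa using congrArg Units.val hk⟩

/-- The geometric sum `1 + q + ⋯ + q ^ (n - 1)`, which for a prime power `q` is the exponent of
the norm map from `𝔽_{q^n}` to `𝔽_q`. -/
def geomSum (q n : ℕ) : ℕ := ∑ i ∈ range n, q ^ i

lemma geomSum_succ (q n : ℕ) : geomSum q (n + 1) = q * geomSum q n + 1 :=
  geom_sum_succ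

lemma geomSum_mul_pred {q : ℕ} (hq : 0 < q) (n : ℕ) : geomSum q n * (q - 1) = q ^ n - 1 := by
  obtain ⟨q, rfl⟩ := Nat.exists_eq_succ_of_ne_zero hq.ne'
  simp [geomSum, ← geom_sum_mul_add q n]

variable {F E : Type*} [Field F] [Fintype F] [Field E] [Finite E] [Algebra F E]

lemma geomSum_dvd_card_units :
    geomSum (Fintype.card F) (Module.finrank F E) ∣ Nat.card Eˣ := by
  have := Fintype.ofFinite E
  rw [Nat.card_units, Nat.card_eq_fintype_card, Module.card_eq_pow_finrank (K := F) (V := E),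
    ← geomSum_mul_pred Fintype.card_pos]
  exact dvd_mul_right _ _

/-- Multiplication by elements of `F` changes the exponent of `x` with respect to a generator of
`Eˣ` by arbitrary multiples of the exponent of the norm and preserves trace zero. -/
lemma exists_isPrimitiveElem_trace_eq_zero {x : E} (hx0 : x ≠ 0) (htr : Algebra.trace F E x = 0)
    (hx : ∀ p ∈ (geomSum (Fintype.card F) (Module.finrank F E)).primeFactors, ∀ y : E, y ^ p ≠ x) :
    ∃ α : E, IsPrimitiveElem α ∧ Algebra.trace F E α = 0 := by
  obtain ⟨y, hy⟩ := exists_orderOf_mul_pow_eq_natCard (geomSum_dvd_card_units (F := F))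
    (x := Units.mk0 x hx0) fun p hp y hy ↦ hx p hp y (by simpa using congrArg Units.val hy)
  refine ⟨_, isPrimitiveElem_of_orderOf_eq hy, ?_⟩
  have norm_y : (y : E) ^ geomSum (Fintype.card F) (Module.finrank F E) =
      algebraMap F E (Algebra.norm F (y : E)) := by
    rw [FiniteField.algebraMap_norm_eq_pow_sum, geomSum, Nat.card_eq_fintype_card]
  rw [Units.val_mul, Units.val_pow_eq_pow_val, norm_y, mul_comm, ← Algebra.smul_def, map_smul,
    Units.val_mk0, htr, smul_zero]

end Scaling

section Criterion

/-- The sieve inequality for trace-zero elements of `𝔽_{q^n}`, in squared form: the prime divisors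
of `geomSum q n` below `r` are sieved by inclusion-exclusion and the other ones one at a time. -/
def SieveCondition (q n r : ℕ) : Prop :=
  let K := {p ∈ (geomSum q n).primeFactors | p < r}
  let S := {p ∈ (geomSum q n).primeFactors | ¬p < r}
  let δ : ℚ := 1 - ∑ p ∈ S, (p : ℚ)⁻¹
  0 < δ ∧ q ^ (n - 2) * (2 ^ #K * ((#S - 1) / δ + 2) - 1) ^ 2 < (geomSum q (n - 1) : ℚ) ^ 2

instance (q n r : ℕ) : Decidable (SieveCondition q n r) := inferInstanceAs (Decidable (_ ∧ _))

lemma pow_orderOf_ne_of_mulChar_ne_one {M R : Type*} [CommMonoid M] [CommMonoidWithZero R]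
    {χ : MulChar M R} {x : M} (hx : IsUnit x) (hχx : χ x ≠ 1) (y : M) : y ^ orderOf χ ≠ x := by
  rintro rfl
  obtain hχ | hχ := (orderOf χ).eq_zero_or_pos
  · simp [hχ] at hχx
  obtain ⟨u, rfl⟩ := (isUnit_pow_iff hχ.ne').mp hx
  rw [map_pow, ← MulChar.pow_apply_coe, pow_orderOf_eq_one, MulChar.one_apply_coe] at hχx
  exact hχx rfl

variable {F E : Type*} [Field F] [Fintype F] [Field E] [Algebra F E]

lemma mul_lt_card_nonzeroTraceZero [Fintype E] (hn : 2 ≤ Module.finrank F E) {X : ℝ}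
    (hX : Fintype.card F ^ (Module.finrank F E - 2) * X ^ 2 <
      (geomSum (Fintype.card F) (Module.finrank F E - 1) : ℝ) ^ 2) :
    (Fintype.card F - 1) * √(Fintype.card E) / Fintype.card F * X <
      #(nonzeroTraceZero F E) := by
  set q := Fintype.card F with hq
  have hq1 : (1 : ℝ) < q := by exact_mod_cast Fintype.one_lt_card
  have hq0 : (0 : ℝ) < q := zero_lt_one.trans hq1
  have sqrt_card : √(Fintype.card E : ℝ) = √(q ^ (Module.finrank F E - 2)) * q := by
    rw [Module.card_eq_pow_finrank (K := F), Nat.cast_pow, ← hq]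
    nth_rw 1 [← Nat.sub_add_cancel hn]
    rw [pow_add, Real.sqrt_mul (by positivity), Real.sqrt_sq hq0.le]
  have hlt : √((q : ℝ) ^ (Module.finrank F E - 2)) * X < geomSum q (Module.finrank F E - 1) := by
    refine lt_of_pow_lt_pow_left₀ 2 (Nat.cast_nonneg _) ?_
    rwa [mul_pow, Real.sq_sqrt (by positivity)]
  calc (q - 1) * √(Fintype.card E) / q * X
      = (q - 1) * (√(q ^ (Module.finrank F E - 2)) * X) := by
        rw [sqrt_card]
        field_simp
    _ < (q - 1) * geomSum q (Module.finrank F E - 1) :=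
        mul_lt_mul_of_pos_left hlt (sub_pos.mpr hq1)
    _ = #(nonzeroTraceZero F E) := by
        rw [card_nonzeroTraceZero, ← geomSum_mul_pred Fintype.card_pos, ← hq, Nat.cast_mul,
          Nat.cast_pred Fintype.card_pos, mul_comm]

lemma exists_trace_eq_zero_forall_pow_ne [Finite E] (hn : 2 ≤ Module.finrank F E) {r : ℕ}
    (h : SieveCondition (Fintype.card F) (Module.finrank F E) r) :
    ∃ x : E, x ≠ 0 ∧ Algebra.trace F E x = 0 ∧
      ∀ p ∈ (geomSum (Fintype.card F) (Module.finrank F E)).primeFactors, ∀ y : E, y ^ p ≠ x := by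
  have := Fintype.ofFinite E
  obtain ⟨hδ, hlt⟩ := h
  set P := (geomSum (Fintype.card F) (Module.finrank F E)).primeFactors
  set K := {p ∈ P | p < r}
  set S := {p ∈ P | ¬p < r}
  have hKS : K ∪ S = P := filter_union_filter_not_eq _ _
  have prime_of_mem {p : ℕ} (hp : p ∈ P) : p.Prime := Nat.prime_of_mem_primeFactors hp
  have character (p : ℕ) (hp : p ∈ P) : ∃ χ : MulChar E ℂ, orderOf χ = p := by
    have hdvd : p ∣ Fintype.card E - 1 := by
      rw [← Nat.card_eq_fintype_card, ← Nat.card_units]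
      exact (Nat.dvd_of_mem_primeFactors hp).trans geomSum_dvd_card_units
    exact MulChar.exists_mulChar_orderOf E hdvd
      (Complex.isPrimitiveRoot_exp p (prime_of_mem hp).ne_zero)
  choose! ψ hψ using character
  have sum_inv : ∑ p ∈ S, (orderOf (ψ p) : ℝ)⁻¹ = ∑ p ∈ S, (p : ℝ)⁻¹ :=
    sum_congr rfl fun p hp ↦ by rw [hψ p (mem_of_mem_filter p hp)]
  obtain ⟨x, hx⟩ : (sifted ψ (nonzeroTraceZero F E) (K ∪ S)).Nonempty := by
    refine sifted_union_nonempty (δ := ((1 - ∑ p ∈ S, (p : ℚ)⁻¹ : ℚ) : ℝ))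
      (fun x hx ↦ (mem_nonzeroTraceZero.mp hx).1.isUnit)
      (fun χ hχ ↦ norm_sum_nonzeroTraceZero_le hχ) (disjoint_filter_filter_not _ _ _)
      ?_ ?_ ?_ (by exact_mod_cast hδ) (mul_lt_card_nonzeroTraceZero hn (by exact_mod_cast hlt))
    · rw [hKS]
      exact fun p hp ↦ by simpa only [hψ p hp] using (prime_of_mem hp).one_lt
    · rw [← coe_union, hKS]
      intro p hp p' hp' hne
      simpa only [Function.onFun, hψ p hp, hψ p' hp'] using
        (Nat.coprime_primes (prime_of_mem hp) (prime_of_mem hp')).mpr hne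
    · rw [sum_inv]
      push_cast
      rfl
  rw [hKS, sifted, mem_filter, mem_nonzeroTraceZero] at hx
  refine ⟨x, hx.1.1, hx.1.2, fun p hp y ↦ ?_⟩
  have := pow_orderOf_ne_of_mulChar_ne_one hx.1.1.isUnit (hx.2 p hp) y
  rwa [hψ p hp] at this

theorem exists_isPrimitiveElem_trace_eq_zero_of_sieveCondition [Finite E]
    (hn : 2 ≤ Module.finrank F E) {r : ℕ}
    (h : SieveCondition (Fintype.card F) (Module.finrank F E) r) :
    ∃ α : E, IsPrimitiveElem α ∧ Algebra.trace F E α = 0 := by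
  obtain ⟨x, hx0, htr, hx⟩ := exists_trace_eq_zero_forall_pow_ne hn h
  exact exists_isPrimitiveElem_trace_eq_zero hx0 htr hx

end Criterion

section Numerics

lemma pow_card_mul_prod_le {P A : Finset ℕ} {c : ℕ} (hP : ∀ p ∈ P, p < c → p ∈ A)
    (hA : ∀ p ∈ A, p ≤ c) : c ^ #P * ∏ p ∈ A, p ≤ c ^ #A * ∏ p ∈ P, p := by
  have hPA : c ^ #(P \ A) ≤ ∏ p ∈ P \ A, p := pow_card_le_prod _ _ _ fun p hp ↦ by
    rw [mem_sdiff] at hp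
    exact not_lt.mp (mt (hP p hp.1) hp.2)
  have hAP : ∏ p ∈ A \ P, p ≤ c ^ #(A \ P) :=
    prod_le_pow_card _ _ _ fun p hp ↦ hA p (mem_sdiff.mp hp).1
  rw [← prod_inter_mul_prod_sdiff A P, ← prod_inter_mul_prod_sdiff P A,
    ← card_inter_add_card_sdiff P A, ← card_inter_add_card_sdiff A P, inter_comm A P, pow_add,
    pow_add]
  calc c ^ #(P ∩ A) * c ^ #(P \ A) * ((∏ p ∈ P ∩ A, p) * ∏ p ∈ A \ P, p)
      ≤ c ^ #(P ∩ A) * (∏ p ∈ P \ A, p) * ((∏ p ∈ P ∩ A, p) * c ^ #(A \ P)) := by gcongr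
    _ = c ^ #(P ∩ A) * c ^ #(A \ P) * ((∏ p ∈ P ∩ A, p) * ∏ p ∈ P \ A, p) := by ring

lemma sum_inv_le {P A : Finset ℕ} {c : ℕ} (hc : 0 < c) (hP : ∀ p ∈ P, p < c → p ∈ A)
    (hA : ∀ p ∈ A, 0 < p ∧ p ≤ c) :
    ∑ p ∈ P, (p : ℚ)⁻¹ ≤ ∑ p ∈ A, ((p : ℚ)⁻¹ - (c : ℚ)⁻¹) + #P * (c : ℚ)⁻¹ := by
  have nonpos (p : ℕ) (hp : p ∈ P \ A) : (p : ℚ)⁻¹ - (c : ℚ)⁻¹ ≤ 0 := by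
    rw [mem_sdiff] at hp
    have hcp : c ≤ p := not_lt.mp (mt (hP p hp.1) hp.2)
    rw [sub_nonpos]
    gcongr
  have nonneg (p : ℕ) (hp : p ∈ A) : 0 ≤ (p : ℚ)⁻¹ - (c : ℚ)⁻¹ := by
    obtain ⟨hp0, hpc⟩ := hA p hp
    rw [sub_nonneg]
    gcongr
  have : ∑ p ∈ P, ((p : ℚ)⁻¹ - (c : ℚ)⁻¹) ≤ ∑ p ∈ A, ((p : ℚ)⁻¹ - (c : ℚ)⁻¹) :=
    calc ∑ p ∈ P, ((p : ℚ)⁻¹ - (c : ℚ)⁻¹) ≤ ∑ p ∈ P ∩ A, ((p : ℚ)⁻¹ - (c : ℚ)⁻¹) := by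
          rw [← sum_inter_add_sum_sdiff P A]
          exact add_le_of_nonpos_right (sum_nonpos nonpos)
      _ ≤ _ := sum_le_sum_of_subset_of_nonneg inter_subset_right fun p hp _ ↦ nonneg p hp
  rw [sum_sub_distrib, sum_const, nsmul_eq_mul] at this
  linarith

variable {q n : ℕ}

lemma geomSum_pos (hn : 0 < n) : 0 < geomSum q n := by
  obtain ⟨n, rfl⟩ := Nat.exists_eq_add_one.mpr hn
  rw [geomSum, sum_range_succ']
  positivity

lemma succ_mul_pow_le_geomSum (q n : ℕ) : (q + 1) * q ^ n ≤ geomSum q (n + 2) := by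
  rw [geomSum, sum_range_succ, sum_range_succ, add_one_mul, ← pow_succ', add_comm, add_assoc]
  exact Nat.le_add_left _ _

lemma exists_sieveCondition_of_two_pow_card (h : q ^ (n - 2) *
    (2 ^ #(geomSum q n).primeFactors) ^ 2 < geomSum q (n - 1) ^ 2) :
    ∃ r, SieveCondition q n r := by
  refine ⟨geomSum q n + 1, ?_⟩
  have lt_of_mem (p : ℕ) (hp : p ∈ (geomSum q n).primeFactors) : p < geomSum q n + 1 :=
    Nat.lt_succ_of_le (Nat.le_of_mem_primeFactors hp)
  have one_le : (1 : ℚ) ≤ 2 ^ #(geomSum q n).primeFactors := one_le_pow₀ one_le_two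
  rw [SieveCondition, filter_true_of_mem lt_of_mem,
    filter_false_of_mem fun p hp ↦ not_not.mpr (lt_of_mem p hp)]
  refine ⟨by simp, lt_of_le_of_lt ?_ (by exact_mod_cast h : (q : ℚ) ^ (n - 2) *
    (2 ^ #(geomSum q n).primeFactors) ^ 2 < geomSum q (n - 1) ^ 2)⟩
  simp only [card_empty, sum_empty, Nat.cast_zero]
  gcongr <;> linarith

lemma mem_of_prime_dvd_geomSum_three : ∀ p < 31, p.Prime → ∀ q, p ∣ geomSum q 3 →
    p ∈ ({3, 7, 13, 19} : Finset ℕ) := by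
  have residues : ∀ p < 31, p.Prime → ∀ r < p, p ∣ geomSum r 3 →
      p ∈ ({3, 7, 13, 19} : Finset ℕ) := by decide +kernel
  intro p hp31 hp q hpq
  refine residues p hp31 hp (q % p) (Nat.mod_lt q hp.pos) ?_
  refine ((Nat.ModEq.sum fun i _ ↦ ?_).dvd_iff dvd_rfl).mpr hpq
  exact (Nat.mod_modEq q p).pow i

lemma sixteen_pow_card_primeFactors_geomSum_three_le (h : 8 ≤ #(geomSum q 3).primeFactors) :
    16 ^ #(geomSum q 3).primeFactors ≤ geomSum q 3 := by
  set P := (geomSum q 3).primeFactors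
  have hmem (p : ℕ) (hp : p ∈ P) (hlt : p < 31) : p ∈ ({3, 7, 13, 19} : Finset ℕ) :=
    mem_of_prime_dvd_geomSum_three p hlt (Nat.prime_of_mem_primeFactors hp) q
      (Nat.dvd_of_mem_primeFactors hp)
  have hprod : 31 ^ #P * 5187 ≤ 31 ^ 4 * ∏ p ∈ P, p := pow_card_mul_prod_le hmem (by decide)
  have hle : ∏ p ∈ P, p ≤ geomSum q 3 :=
    Nat.le_of_dvd (geomSum_pos three_pos) (Nat.prod_primeFactors_dvd _)
  obtain ⟨j, hj⟩ := Nat.exists_eq_add_of_le h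
  have : 16 ^ j ≤ 31 ^ j := Nat.pow_le_pow_left (by norm_num) j
  rw [hj, pow_add] at hprod ⊢
  omega

lemma exists_sieveCondition_three_of_card_ge (hq : 0 < q)
    (h : 8 ≤ #(geomSum q 3).primeFactors) : ∃ r, SieveCondition q 3 r := by
  apply exists_sieveCondition_of_two_pow_card
  set W := 2 ^ #(geomSum q 3).primeFactors
  have hW : W ^ 4 ≤ geomSum q 3 :=
    calc W ^ 4 = 16 ^ #(geomSum q 3).primeFactors := by rw [pow_right_comm]; norm_num
      _ ≤ geomSum q 3 := sixteen_pow_card_primeFactors_geomSum_three_le h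
  have hWq : W ^ 2 < q + 1 := by
    refine lt_of_pow_lt_pow_left₀ 2 (Nat.zero_le _) ?_
    calc (W ^ 2) ^ 2 = W ^ 4 := by ring
      _ ≤ geomSum q 3 := hW
      _ < (q + 1) ^ 2 := by simp only [geomSum, sum_range_succ, range_zero, sum_empty]; linarith
  calc q ^ (3 - 2) * W ^ 2 < (q + 1) * (q + 1) := by
        rw [pow_one]
        exact Nat.mul_lt_mul_of_lt_of_le q.lt_succ_self hWq.le (Nat.succ_pos q)
    _ = geomSum q (3 - 1) ^ 2 := by simp only [geomSum, sum_range_succ, range_zero, sum_empty]; ring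

lemma sieveCondition_three_zero (hq : 700 ≤ q) (h : #(geomSum q 3).primeFactors ≤ 7) :
    SieveCondition q 3 0 := by
  rw [SieveCondition]
  simp only [not_lt_zero, filter_false, not_false_eq_true, filter_true, card_empty, pow_zero]
  set P := (geomSum q 3).primeFactors with hP
  have hmem (p : ℕ) (hp : p ∈ P) (hlt : p < 19) : p ∈ ({3, 7, 13} : Finset ℕ) := by
    have := mem_of_prime_dvd_geomSum_three p (by omega) (Nat.prime_of_mem_primeFactors hp) q
      (Nat.dvd_of_mem_primeFactors hp)
    simp only [mem_insert, mem_singleton] at this ⊢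
    omega
  have card_pos : (1 : ℚ) ≤ #P := by
    rw [Nat.one_le_cast, Nat.one_le_iff_ne_zero, card_ne_zero, hP, Nat.nonempty_primeFactors]
    simp only [geomSum, sum_range_succ, range_zero, sum_empty]
    nlinarith
  have card_le : (#P : ℚ) ≤ 7 := by exact_mod_cast h
  have sum_le : ∑ p ∈ P, (p : ℚ)⁻¹ ≤ 1 - 0.236 := by
    refine (sum_inv_le (by norm_num) hmem (by decide)).trans ?_
    rw [show ∑ p ∈ ({3, 7, 13} : Finset ℕ), ((p : ℚ)⁻¹ - ((19 : ℕ) : ℚ)⁻¹) = 2050 / 5187 by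
      norm_num, Nat.cast_ofNat]
    linarith
  set δ := 1 - ∑ p ∈ P, (p : ℚ)⁻¹
  have hδ : 0.236 ≤ δ := by linarith
  refine ⟨by linarith, ?_⟩
  have quotient_nonneg : 0 ≤ ((#P : ℚ) - 1) / δ := div_nonneg (by linarith) (by linarith)
  have quotient_le : ((#P : ℚ) - 1) / δ ≤ 6 / 0.236 := by gcongr; linarith
  have hqQ : (700 : ℚ) ≤ q := by exact_mod_cast hq
  calc (q : ℚ) ^ (3 - 2) * (1 * (((#P : ℚ) - 1) / δ + 2) - 1) ^ 2
      ≤ q * (6 / 0.236 + 1) ^ 2 := by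
        rw [pow_one]
        gcongr <;> linarith
    _ ≤ (q : ℚ) * q := by
        gcongr
        exact (by norm_num : (6 / 0.236 + 1 : ℚ) ^ 2 ≤ 700).trans hqQ
    _ < (geomSum q (3 - 1) : ℚ) ^ 2 := by
      simp only [geomSum, sum_range_succ, range_zero, sum_empty]
      push_cast
      nlinarith

set_option maxRecDepth 10000 in
lemma exists_sieveCondition_three_of_lt : ∀ q < 700, #q.primeFactors = 1 → q ≠ 4 → q ≠ 16 →
    ∃ r ∈ ({0, 3, 8} : Finset ℕ), SieveCondition q 3 r := by
  decide +kernel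

lemma exists_sieveCondition_three (hq : IsPrimePow q) (h4 : q ≠ 4) (h16 : q ≠ 16) :
    ∃ r, SieveCondition q 3 r := by
  obtain hsmall | hlarge := lt_or_ge q 700
  · obtain ⟨r, -, hr⟩ := exists_sieveCondition_three_of_lt q hsmall
      (isPrimePow_iff_card_primeFactors_eq_one.mp hq) h4 h16
    exact ⟨r, hr⟩
  obtain hω | hω := lt_or_ge #(geomSum q 3).primeFactors 8
  · exact ⟨0, sieveCondition_three_zero hlarge (Nat.lt_succ_iff.mp hω)⟩
  · exact exists_sieveCondition_three_of_card_ge hq.pos hω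

lemma eight_pow_card_primeFactors_le {v : ℕ} (hv : v ≠ 0) (h : 9 ≤ #v.primeFactors) :
    8 ^ #v.primeFactors ≤ v := by
  have hprime : ∀ p < 23, p.Prime → p ∈ ({2, 3, 5, 7, 11, 13, 17, 19} : Finset ℕ) := by
    decide
  have hprod : 23 ^ #v.primeFactors * 9699690 ≤ 23 ^ 8 * ∏ p ∈ v.primeFactors, p :=
    pow_card_mul_prod_le (fun p hp hlt ↦ hprime p hlt (Nat.prime_of_mem_primeFactors hp))
      (by decide)
  have hle : ∏ p ∈ v.primeFactors, p ≤ v := Nat.le_of_dvd (by omega) v.prod_primeFactors_dvd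
  obtain ⟨j, hj⟩ := Nat.exists_eq_add_of_le h
  have : 8 ^ j ≤ 23 ^ j := Nat.pow_le_pow_left (by norm_num) j
  rw [hj, pow_add] at hprod ⊢
  omega

lemma exists_sieveCondition_of_card_ge (hq : 0 < q) (hn : 4 ≤ n)
    (h : 9 ≤ #(geomSum q n).primeFactors) : ∃ r, SieveCondition q n r := by
  apply exists_sieveCondition_of_two_pow_card
  obtain ⟨m, rfl⟩ := Nat.exists_eq_add_of_le' hn
  set W := 2 ^ #(geomSum q (m + 4)).primeFactors
  set b := q ^ (m + 1)
  set k := geomSum q (m + 4 - 1)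
  have : 0 < b := by positivity
  have hqb : q ≤ b := Nat.le_self_pow (Nat.succ_ne_zero m) q
  have hbk : (q + 1) * b ≤ k := succ_mul_pow_le_geomSum q (m + 1)
  have hk : 1 ≤ k := geomSum_pos (by omega)
  have hW : W ^ 3 ≤ (q + 1) * k :=
    calc W ^ 3 = 8 ^ #(geomSum q (m + 4)).primeFactors := by rw [pow_right_comm]; norm_num
      _ ≤ geomSum q (m + 4) := eight_pow_card_primeFactors_le (geomSum_pos (by omega)).ne' h
      _ = q * k + 1 := geomSum_succ q _
      _ ≤ (q + 1) * k := by linarith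
  refine lt_of_pow_lt_pow_left₀ 3 (Nat.zero_le _) ?_
  calc (q ^ (m + 4 - 2) * W ^ 2) ^ 3 = (q * b) ^ 3 * (W ^ 3) ^ 2 := by
        rw [show m + 4 - 2 = m + 1 + 1 by omega, pow_succ']
        ring
    _ ≤ (q * b) ^ 3 * ((q + 1) * k) ^ 2 := by gcongr
    _ = (q ^ 2 * q) * b ^ 3 * (q + 1) ^ 2 * k ^ 2 := by ring
    _ < ((q + 1) ^ 2 * b) * b ^ 3 * (q + 1) ^ 2 * k ^ 2 := by
        have : q ^ 2 * q < (q + 1) ^ 2 * b := by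
          calc q ^ 2 * q ≤ q ^ 2 * b := by gcongr
            _ < (q + 1) ^ 2 * b := by gcongr; exact q.lt_succ_self
        gcongr
    _ = ((q + 1) * b) ^ 4 * k ^ 2 := by ring
    _ ≤ k ^ 4 * k ^ 2 := by gcongr
    _ = (k ^ 2) ^ 3 := by ring

lemma exists_sieveCondition_of_le_pow (hn : 3 ≤ n) (hq : 65536 ≤ q ^ (n - 2))
    (h : #(geomSum q n).primeFactors ≤ 8) : ∃ r, SieveCondition q n r := by
  apply exists_sieveCondition_of_two_pow_card
  obtain ⟨m, rfl⟩ := Nat.exists_eq_add_of_le' hn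
  have hW : (2 ^ #(geomSum q (m + 3)).primeFactors) ^ 2 ≤ 65536 := by
    rw [← pow_mul]
    exact Nat.pow_le_pow_right two_pos (Nat.mul_le_mul_right 2 h)
  have hk : q ^ (m + 1) < geomSum q (m + 2) := by
    rw [geomSum, sum_range_succ]
    exact Nat.lt_add_of_pos_left (geomSum_pos m.succ_pos)
  calc q ^ (m + 1) * (2 ^ #(geomSum q (m + 3)).primeFactors) ^ 2
      ≤ q ^ (m + 1) * q ^ (m + 1) := Nat.mul_le_mul_left _ (hW.trans hq)
    _ < geomSum q (m + 2) * geomSum q (m + 2) := Nat.mul_self_lt_mul_self hk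
    _ = geomSum q (m + 2) ^ 2 := (sq _).symm

set_option maxRecDepth 10000 in
lemma exists_sieveCondition_of_pow_lt : ∀ n ∈ Ico 4 18, ∀ q < 256, q ^ (n - 2) < 65536 →
    #q.primeFactors = 1 → ¬(n = 4 ∧ q = 5) →
    ∃ r ∈ ({0, 3, 8} : Finset ℕ), SieveCondition q n r := by
  decide +kernel

lemma exists_sieveCondition_of_four_le (hq : IsPrimePow q) (hn : 4 ≤ n) (h : ¬(n = 4 ∧ q = 5)) :
    ∃ r, SieveCondition q n r := by
  obtain hω | hω := le_or_gt 9 #(geomSum q n).primeFactors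
  · exact exists_sieveCondition_of_card_ge hq.pos hn hω
  obtain hlarge | hsmall := le_or_gt 65536 (q ^ (n - 2))
  · exact exists_sieveCondition_of_le_pow (by omega) hlarge (Nat.lt_succ_iff.mp hω)
  have hn18 : n - 2 < 16 := (Nat.pow_lt_pow_iff_right one_lt_two).mp <|
    (Nat.pow_le_pow_left hq.two_le _).trans_lt hsmall
  have hq256 : q < 256 := lt_of_pow_lt_pow_left₀ 2 (Nat.zero_le _) <|
    (Nat.pow_le_pow_right hq.pos (by omega)).trans_lt hsmall
  obtain ⟨r, -, hr⟩ := exists_sieveCondition_of_pow_lt n (by rw [mem_Ico]; omega) q hq256 hsmall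
    (isPrimePow_iff_card_primeFactors_eq_one.mp hq) h
  exact ⟨r, hr⟩

end Numerics

section ExceptionalCases

variable {F E Ω : Type*} [Field F] [Fintype F] [Field E] [Algebra F E]
  [Field Ω] [Algebra F Ω] [Algebra E Ω]

lemma mem_range_algebraMap_of_pow_card_eq [Fintype E] {x : Ω} (hx : x ^ Fintype.card E = x) :
    x ∈ (algebraMap E Ω).range := by
  have splits : (Polynomial.X ^ Fintype.card E - Polynomial.X : Polynomial E).Splits := by
    rw [Polynomial.splits_iff_card_roots, FiniteField.roots_X_pow_card_sub_X,
      FiniteField.X_pow_card_sub_X_natDegree_eq E Fintype.one_lt_card, card_val, card_univ]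
  refine splits.mem_range_of_isRoot
    (FiniteField.X_pow_card_sub_X_ne_zero E Fintype.one_lt_card) ?_
  simp [hx]

lemma pow_geomSum_eq_one {y : Ω} {n : ℕ}
    (hy : ∑ i ∈ range n, y ^ geomSum (Fintype.card F) i = 0) :
    y ^ geomSum (Fintype.card F) n = 1 := by
  have frobenius := congrArg (FiniteField.frobeniusAlgHom F Ω) hy
  simp only [map_sum, map_zero, FiniteField.coe_frobeniusAlgHom, ← pow_mul] at frobenius
  have telescope := sum_range_sub (fun i ↦ y ^ geomSum (Fintype.card F) i) n
  have pow_geomSum_succ (i : ℕ) : y ^ geomSum (Fintype.card F) (i + 1) =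
      y * y ^ (geomSum (Fintype.card F) i * Fintype.card F) := by
    rw [geomSum_succ, pow_succ', mul_comm (Fintype.card F)]
  simp only [sum_sub_distrib, pow_geomSum_succ, ← mul_sum, frobenius, hy, mul_zero, sub_zero]
    at telescope
  exact (sub_eq_zero.mp telescope.symm).trans (pow_zero y)

lemma algebraMap_trace_eq_mul_sum_pow_geomSum [Finite E] (x : E) :
    algebraMap F E (Algebra.trace F E x) = x * ∑ i ∈ range (Module.finrank F E),
      (x ^ (Fintype.card F - 1)) ^ geomSum (Fintype.card F) i := by
  rw [FiniteField.algebraMap_trace_eq_sum_pow, mul_sum, Nat.card_eq_fintype_card]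
  refine sum_congr rfl fun i _ ↦ ?_
  rw [← pow_mul, ← pow_succ', mul_comm, geomSum_mul_pred Fintype.card_pos,
    Nat.sub_add_cancel (Nat.one_le_pow _ _ Fintype.card_pos)]

/-- Solving `x ^ (q - 1) = y` turns the trace of `x` into `x` times the sum in `hy`. -/
lemma exists_isPrimitiveElem_trace_eq_zero_of_sum_pow_geomSum [Finite E] [IsAlgClosed Ω]
    {y : Ω} (hy : ∑ i ∈ range (Module.finrank F E), y ^ geomSum (Fintype.card F) i = 0)
    (hne : ∀ p ∈ (geomSum (Fintype.card F) (Module.finrank F E)).primeFactors,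
      y ^ (geomSum (Fintype.card F) (Module.finrank F E) / p) ≠ 1) :
    ∃ α : E, IsPrimitiveElem α ∧ Algebra.trace F E α = 0 := by
  have := Fintype.ofFinite E
  set q := Fintype.card F
  set v := geomSum q (Module.finrank F E)
  have card_E : (q - 1) * v = Fintype.card E - 1 := by
    rw [mul_comm, geomSum_mul_pred Fintype.card_pos, Module.card_eq_pow_finrank (K := F) (V := E)]
  obtain ⟨z, rfl⟩ := IsAlgClosed.exists_pow_nat_eq y
    (Nat.sub_pos_of_lt Fintype.one_lt_card : 0 < q - 1)
  have hz : z ^ (Fintype.card E - 1) = 1 := by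
    rw [← card_E, pow_mul]
    exact pow_geomSum_eq_one hy
  have hz0 : z ≠ 0 :=
    (IsUnit.of_pow_eq_one hz (Nat.sub_pos_of_lt Fintype.one_lt_card).ne').ne_zero
  obtain ⟨x, rfl⟩ : z ∈ (algebraMap E Ω).range := by
    refine mem_range_algebraMap_of_pow_card_eq ?_
    rw [← Nat.sub_add_cancel Fintype.card_pos, pow_succ, hz, one_mul]
  rw [map_ne_zero] at hz0
  simp only [← map_pow, ← map_sum, map_eq_zero] at hy
  refine exists_isPrimitiveElem_trace_eq_zero hz0 ?_ ?_
  · rw [← map_eq_zero (algebraMap F E), algebraMap_trace_eq_mul_sum_pow_geomSum, hy, mul_zero]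
  · rintro p hp w rfl
    have hw : w ≠ 0 := (pow_ne_zero_iff (Nat.prime_of_mem_primeFactors hp).ne_zero).mp hz0
    apply hne p hp
    rw [← map_pow, ← map_pow, ← pow_mul, ← pow_mul, mul_left_comm,
      Nat.mul_div_cancel' (Nat.dvd_of_mem_primeFactors hp), card_E,
      FiniteField.pow_card_sub_one_eq_one w hw, map_one]

/-- `X ^ 4 + X ^ 3 + 3 * X ^ 2 + 1` is one of the quartic factors over `𝔽₅` of
`X ^ 31 + X ^ 6 + X + 1` whose roots have order `156`. -/
lemma pow_six_of_quartic_eq_zero {R : Type*} [CommRing R] (h5 : (5 : R) = 0) {y : R}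
    (hy : y ^ 4 + y ^ 3 + 3 * y ^ 2 + 1 = 0) : y ^ 6 = y + 2 := by
  linear_combination (y ^ 2 - y - 2) * hy + (y ^ 3 + y ^ 2) * h5

lemma pow_thirty_of_quartic_eq_zero {R : Type*} [CommRing R] (h5 : (5 : R) = 0) {y : R}
    (hy : y ^ 4 + y ^ 3 + 3 * y ^ 2 + 1 = 0) : y ^ 30 = y ^ 5 + 2 := by
  rw [show y ^ 30 = (y ^ 6) ^ 5 by ring, pow_six_of_quartic_eq_zero h5 hy]
  linear_combination (2 * y ^ 4 + 8 * y ^ 3 + 16 * y ^ 2 + 16 * y + 6) * h5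

lemma exists_root_trace_quartic_of_five_eq_zero [IsAlgClosed Ω] (h5 : (5 : Ω) = 0) :
    ∃ y : Ω, ∑ i ∈ range 4, y ^ geomSum 5 i = 0 ∧
      ∀ p ∈ (geomSum 5 4).primeFactors, y ^ (geomSum 5 4 / p) ≠ 1 := by
  obtain ⟨y, hy⟩ := IsAlgClosed.exists_root
    (.X ^ 4 + .X ^ 3 + 3 * .X ^ 2 + 1 : Polynomial Ω)
    (by rw [show Polynomial.degree _ = 4 by compute_degree!]; decide)
  simp only [Polynomial.IsRoot, Polynomial.eval_add, Polynomial.eval_pow, Polynomial.eval_mul,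
    Polynomial.eval_X, Polynomial.eval_ofNat, Polynomial.eval_one] at hy
  have pow_6 := pow_six_of_quartic_eq_zero h5 hy
  have pow_30 := pow_thirty_of_quartic_eq_zero h5 hy
  have sum_eq_zero : ∑ i ∈ range 4, y ^ geomSum 5 i = 0 := by
    simp only [geomSum, sum_range_succ, range_zero, sum_empty]
    linear_combination y * pow_30 + 2 * pow_6 + (y + 1) * h5
  have pow_12 : y ^ 12 ≠ 1 := by
    rw [show y ^ 12 = (y ^ 6) ^ 2 by ring, pow_6]
    intro h
    apply one_ne_zero (α := Ω)
    linear_combination (2 * y ^ 3 + 2 * y ^ 2 - 2) * h + (-2 * y + 2) * hy -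
      (2 * y ^ 4 + 2 * y ^ 3 + 2 * y ^ 2 - 2 * y - 1) * h5
  have pow_52 : y ^ 52 ≠ 1 := by
    rw [show y ^ 52 = y ^ 30 * (y ^ 6) ^ 3 * y ^ 4 by ring, pow_30, pow_6]
    intro h
    apply one_ne_zero (α := Ω)
    linear_combination (y ^ 3 - y ^ 2 - y + 1) * h + (-y ^ 11 + y ^ 10 + 2 * y ^ 9 - y ^ 8 + y ^ 6 -
      y ^ 5 - y ^ 4 + 2 * y ^ 3 - 2 * y ^ 2 - y + 2) * hy - (y ^ 14 + y ^ 13 - y ^ 12 - 2 * y ^ 11 +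
      y ^ 10 + 4 * y ^ 9 + 2 * y ^ 8 - 4 * y ^ 7 - 6 * y ^ 6 + 2 * y ^ 5 + 2 * y ^ 4 + y ^ 2) * h5
  have pow_78 : y ^ 78 ≠ 1 := by
    rw [show y ^ 78 = (y ^ 30) ^ 2 * (y ^ 6) ^ 3 by ring, pow_30, pow_6]
    intro h
    apply one_ne_zero (α := Ω)
    linear_combination 2 * h + (-2 * y ^ 9 + 2 * y ^ 7 + 2 * y ^ 6 - y ^ 5 + 2 * y ^ 4 + y ^ 3 - y -
      1) * hy - (2 * y ^ 12 + 4 * y ^ 11 + 4 * y ^ 10 + y ^ 9 + 3 * y ^ 8 + 10 * y ^ 7 +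
      21 * y ^ 6 + 13 * y ^ 5 + y ^ 3 + 9 * y ^ 2 + 19 * y + 12) * h5
  have primeFactors : (geomSum 5 4).primeFactors = {2, 3, 13} := by decide +kernel
  refine ⟨y, sum_eq_zero, ?_⟩
  rw [primeFactors]
  simpa [geomSum, sum_range_succ] using ⟨pow_78, pow_52, pow_12⟩

/-- Over `𝔽₂`, this degree-12 polynomial is the cofactor of `X ^ 5 + X ^ 4 + 1` in
`X ^ 17 + X + 1`. -/
lemma pow_seventeen_of_factor_eq_zero {R : Type*} [CommRing R] (h2 : (2 : R) = 0) {y : R}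
    (hy : y ^ 12 + y ^ 11 + y ^ 10 + y ^ 9 + y ^ 8 + y ^ 6 + y ^ 4 + y + 1 = 0) :
    y ^ 17 = y + 1 := by
  linear_combination (y ^ 5 + y ^ 4 + 1) * hy - (y ^ 16 + y ^ 15 + y ^ 14 + y ^ 13 + y ^ 12 +
    y ^ 11 + y ^ 10 + y ^ 9 + y ^ 8 + y ^ 6 + y ^ 5 + y ^ 4 + y + 1) * h2

lemma pow_ninety_one_ne_one_of_factor_eq_zero {R : Type*} [CommRing R] [Nontrivial R]
    (h2 : (2 : R) = 0) {y : R}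
    (hy : y ^ 12 + y ^ 11 + y ^ 10 + y ^ 9 + y ^ 8 + y ^ 6 + y ^ 4 + y + 1 = 0) :
    y ^ 91 ≠ 1 := by
  rw [show y ^ 91 = (y ^ 17) ^ 5 * y ^ 6 by ring,
    pow_seventeen_of_factor_eq_zero h2 hy]
  intro h
  apply one_ne_zero (α := R)
  linear_combination (y ^ 11 + y ^ 10 + y ^ 7 + y ^ 6) * h + (y ^ 10 + y ^ 9 + y ^ 8 + y ^ 7 +
    y ^ 5 + y ^ 3 + y ^ 2 + y + 1) * hy - (y ^ 22 + 4 * y ^ 21 + 9 * y ^ 20 + 12 * y ^ 19 +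
    10 * y ^ 18 + 8 * y ^ 17 + 10 * y ^ 16 + 12 * y ^ 15 + 10 * y ^ 14 + 6 * y ^ 13 + 3 * y ^ 12 +
    3 * y ^ 11 + 2 * y ^ 10 + 3 * y ^ 9 + 2 * y ^ 8 + y ^ 7 + y ^ 6 + y ^ 5 + y ^ 4 + y ^ 3 +
    y ^ 2 + y) * h2

lemma exists_root_trace_cubic_of_two_eq_zero [IsAlgClosed Ω] (h2 : (2 : Ω) = 0) :
    ∃ y : Ω, ∑ i ∈ range 3, y ^ geomSum 16 i = 0 ∧
      ∀ p ∈ (geomSum 16 3).primeFactors, y ^ (geomSum 16 3 / p) ≠ 1 := by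
  obtain ⟨y, hy⟩ := IsAlgClosed.exists_root (.X ^ 12 + .X ^ 11 + .X ^ 10 + .X ^ 9 + .X ^ 8 +
    .X ^ 6 + .X ^ 4 + .X + 1 : Polynomial Ω)
    (by rw [show Polynomial.degree _ = 12 by compute_degree!]; decide)
  simp only [Polynomial.IsRoot, Polynomial.eval_add, Polynomial.eval_pow, Polynomial.eval_X,
    Polynomial.eval_one] at hy
  have pow_17 := pow_seventeen_of_factor_eq_zero h2 hy
  have sum_eq_zero : ∑ i ∈ range 3, y ^ geomSum 16 i = 0 := by
    simp only [geomSum, sum_range_succ, range_zero, sum_empty]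
    linear_combination pow_17 + (y + 1) * h2
  have pow_21 : y ^ 21 ≠ 1 := by
    rw [show y ^ 21 = y ^ 17 * y ^ 4 by ring, pow_17]
    intro h
    apply one_ne_zero (α := Ω)
    linear_combination (y ^ 11 + y ^ 9 + y) * h + (y ^ 4 + 1) * hy - (y ^ 16 + y ^ 15 + y ^ 14 +
      y ^ 13 + y ^ 12 + y ^ 10 + y ^ 8 + y ^ 6 + y ^ 5 + y ^ 4) * h2
  have pow_39 : y ^ 39 ≠ 1 := by
    rw [show y ^ 39 = (y ^ 17) ^ 2 * y ^ 5 by ring, pow_17]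
    intro h
    apply one_ne_zero (α := Ω)
    linear_combination (y ^ 10 + y ^ 9 + y ^ 8 + y ^ 7 + y ^ 6 + y ^ 5 + y ^ 3 + y) * h +
      (y ^ 5 + y ^ 3 + 1) * hy - (y ^ 17 + 2 * y ^ 16 + 3 * y ^ 15 + 3 * y ^ 14 + 3 * y ^ 13 +
      3 * y ^ 12 + 3 * y ^ 11 + y ^ 10 + 2 * y ^ 9 + y ^ 8 + y ^ 7 + y ^ 6 + y ^ 4) * h2
  have pow_91 := pow_ninety_one_ne_one_of_factor_eq_zero h2 hy
  have primeFactors : (geomSum 16 3).primeFactors = {3, 7, 13} := by decide +kernel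
  refine ⟨y, sum_eq_zero, ?_⟩
  rw [primeFactors]
  simpa [geomSum, sum_range_succ] using ⟨pow_91, pow_39, pow_21⟩

variable (F) in
lemma cast_card_eq_zero_of_algebra : (Fintype.card F : Ω) = 0 := by
  rw [← map_natCast (algebraMap F Ω), FiniteField.cast_card_eq_zero, map_zero]

lemma exists_isPrimitiveElem_trace_eq_zero_of_card_eq_five [Finite E]
    (hF : Fintype.card F = 5) (hrank : Module.finrank F E = 4) :
    ∃ α : E, IsPrimitiveElem α ∧ Algebra.trace F E α = 0 := by
  have h5 : (5 : AlgebraicClosure E) = 0 := by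
    simpa only [hF, Nat.cast_ofNat] using cast_card_eq_zero_of_algebra F (Ω := AlgebraicClosure E)
  obtain ⟨y, sum_eq_zero, pow_ne_one⟩ := exists_root_trace_quartic_of_five_eq_zero h5
  exact exists_isPrimitiveElem_trace_eq_zero_of_sum_pow_geomSum
    (by rwa [hF, hrank]) (by rwa [hF, hrank])

lemma exists_isPrimitiveElem_trace_eq_zero_of_card_eq_sixteen [Finite E]
    (hF : Fintype.card F = 16) (hrank : Module.finrank F E = 3) :
    ∃ α : E, IsPrimitiveElem α ∧ Algebra.trace F E α = 0 := by
  have h2 : (2 : AlgebraicClosure E) ^ 4 = 0 := by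
    rw [← cast_card_eq_zero_of_algebra F (Ω := AlgebraicClosure E), hF]
    norm_num
  obtain ⟨y, sum_eq_zero, pow_ne_one⟩ :=
    exists_root_trace_cubic_of_two_eq_zero (eq_zero_of_pow_eq_zero h2)
  exact exists_isPrimitiveElem_trace_eq_zero_of_sum_pow_geomSum
    (by rwa [hF, hrank]) (by rwa [hF, hrank])

end ExceptionalCases

/-- for `n ≥ 3` with not (`n = 3` and `q = 4`), there exists a primitive
element `α` of `F_{q^n}` with `Tr_{q^n|q}(α) = Σ_{i=0}^{n-1} α^{q^i} = 0`. -/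
theorem primitive_zero_trace_exists
    (F E : Type*) [Field F] [Fintype F] [Field E] [Fintype E] [Algebra F E]
    (n : ℕ) (hn : 3 ≤ n) (hrank : Module.finrank F E = n)
    (hexc : ¬(n = 3 ∧ Fintype.card F = 4)) :
    ∃ α : E, IsPrimitiveElem α ∧ ∑ i ∈ Finset.range n, α ^ (Fintype.card F) ^ i = 0 := by
  subst hrank
  suffices ∃ α : E, IsPrimitiveElem α ∧ Algebra.trace F E α = 0 by
    obtain ⟨α, hα, htr⟩ := this
    refine ⟨α, hα, ?_⟩
    rw [← Nat.card_eq_fintype_card, ← FiniteField.algebraMap_trace_eq_sum_pow, htr, map_zero]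
  have hq : IsPrimePow (Fintype.card F) := FiniteField.isPrimePow_card F
  obtain h3 | h4 := hn.eq_or_lt'
  · by_cases h16 : Fintype.card F = 16
    · exact exists_isPrimitiveElem_trace_eq_zero_of_card_eq_sixteen h16 h3
    · obtain ⟨r, hr⟩ := exists_sieveCondition_three hq (fun h ↦ hexc ⟨h3, h⟩) h16
      exact exists_isPrimitiveElem_trace_eq_zero_of_sieveCondition (by omega) (h3 ▸ hr)
  · by_cases h45 : Module.finrank F E = 4 ∧ Fintype.card F = 5
    · exact exists_isPrimitiveElem_trace_eq_zero_of_card_eq_five h45.2 h45.1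
    · obtain ⟨r, hr⟩ := exists_sieveCondition_of_four_le hq h4 h45
      exact exists_isPrimitiveElem_trace_eq_zero_of_sieveCondition (by omega) hr
end

section
/- Let q = p^m be a prime power with p prime, let n be a prime different from p, and suppose q is a primitive root modulo n (the class of q generates the multiplicative group (Z/nZ)^*). Let α be a proper element of F_{q^n} over F_q (that is, α ∉ F_q). Then α is a 1-normal element of F_{q^n} over F_q if and only if Tr_{q^n|q}(α) = 0. -/
/-- The polynomial `Σ_{i=0}^{n-1} α^{q^i} x^{n-1-i}` appearing in the definition of
`k`-normal elements. -/
noncomputable def kNormalPoly {E : Type*} [Field E] (q n : ℕ) (α : E) : Polynomial E :=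
  ∑ i ∈ Finset.range n, Polynomial.C (α ^ q ^ i) * Polynomial.X ^ (n - 1 - i)

/-- `α` is a `k`-normal element of `F_{q^n}` over `F_q`:
`deg (gcd (x^n - 1, Σ_{i=0}^{n-1} α^{q^i} x^{n-1-i})) = k`, the gcd taken in `F_{q^n}[x]`. -/
def IsKNormal {E : Type*} [Field E] (q n k : ℕ) (α : E) : Prop :=
  letI := Classical.decEq E
  (EuclideanDomain.gcd ((Polynomial.X : Polynomial E) ^ n - 1) (kNormalPoly q n α)).natDegree = k

/-!
Put `P = ∑ α ^ q ^ i * X ^ (n - 1 - i)` and factor `X ^ n - 1 = S * (X - 1)` with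
`S = 1 + X + ⋯ + X ^ (n - 1)`. Since `q` generates `(ℤ/n)ˣ` and `[E : F] = n` is prime to `n - 1`,
the polynomial `S = Φ_n` is irreducible not only over `F` but also over `E`. If it divided `P`, then
`P` would be a constant multiple of `S`, and comparing the two leading coefficients would give
`α = α ^ q`, that is `α ∈ F`. Hence only the factor `X - 1` can contribute to the gcd of `X ^ n - 1`
and `P`, and it does so exactly when `P(1) = ∑ α ^ q ^ i` vanishes.
-/

open Polynomial

section FiniteField

variable {F E : Type*} [Field F] [Fintype F]

theorem mem_range_algebraMap_iff_pow_card_eq [CommRing E] [IsDomain E] [Algebra F E] {a : E} :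
    a ∈ (algebraMap F E).range ↔ a ^ Fintype.card F = a := by
  refine ⟨?_, fun h ↦ ?_⟩
  · rintro ⟨b, rfl⟩
    rw [← map_pow, FiniteField.pow_card]
  · have hsplits : (X ^ Fintype.card F - X : F[X]).Splits := by
      rw [splits_iff_card_roots, FiniteField.roots_X_pow_card_sub_X,
        FiniteField.X_pow_card_sub_X_natDegree_eq F Fintype.one_lt_card, Finset.card_val,
        Finset.card_univ]
    have hne := FiniteField.X_pow_card_sub_X_ne_zero F (Fintype.one_lt_card (α := F))
    exact hsplits.mem_range_of_isRoot hne (by simp [h])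

theorem irreducible_cyclotomic_of_orderOf_card_eq_totient {n : ℕ} [NeZero n]
    (h : orderOf (Fintype.card F : ZMod n) = n.totient) : Irreducible (cyclotomic n F) := by
  obtain ⟨k, hp, hcard⟩ := FiniteField.card F (ringChar F)
  have : Fact (ringChar F).Prime := ⟨hp⟩
  have hunit : IsUnit (Fintype.card F : ZMod n) :=
    (orderOf_pos_iff.1 (h ▸ Nat.totient_pos.2 (NeZero.pos n))).isUnit
  have hcoprime : (ringChar F).Coprime n := by
    rwa [ZMod.isUnit_iff_coprime, hcard, Nat.coprime_pow_left_iff k.pos] at hunit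
  refine irreducible_of_dvd_cyclotomic_of_natDegree hcard hcoprime dvd_rfl ?_
  rw [natDegree_cyclotomic, ← h, ← orderOf_units, ZMod.coe_unitOfCoprime, hcard]

variable [Field E] [Algebra F E]

theorem irreducible_cyclotomic_of_coprime_finrank [FiniteDimensional F E] {n : ℕ} [NeZero n]
    (h : orderOf (Fintype.card F : ZMod n) = n.totient)
    (hcoprime : n.totient.Coprime (Module.finrank F E)) : Irreducible (cyclotomic n E) := by
  have : Finite E := Module.finite_of_finite F
  have := Fintype.ofFinite E
  apply irreducible_cyclotomic_of_orderOf_card_eq_totient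
  rw [Module.card_eq_pow_finrank (K := F), Nat.cast_pow,
    Nat.Coprime.orderOf_pow (h.symm ▸ hcoprime), h]

theorem irreducible_geom_sum_X_of_finrank_eq {n : ℕ} [hn : Fact n.Prime]
    (h : orderOf (Fintype.card F : ZMod n) = n - 1) (hrank : Module.finrank F E = n) :
    Irreducible (∑ i ∈ Finset.range n, (X : E[X]) ^ i) := by
  have : FiniteDimensional F E := Module.finite_of_finrank_pos (hrank ▸ hn.out.pos)
  have hcoprime : n.totient.Coprime n :=
    (Nat.coprime_of_lt_prime (Nat.totient_pos.2 hn.out.pos).ne' (n.totient_lt hn.out.one_lt)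
      hn.out).symm
  rw [← Nat.totient_prime hn.out] at h
  rw [← cyclotomic_prime]
  exact irreducible_cyclotomic_of_coprime_finrank h (hrank.symm ▸ hcoprime)

end FiniteField

section Gcd

theorem associated_gcd_mul_left_of_isCoprime {R : Type*} [EuclideanDomain R] [DecidableEq R]
    {a b c : R} (h : IsCoprime a c) :
    Associated (EuclideanDomain.gcd (a * b) c) (EuclideanDomain.gcd b c) := by
  have hleft := EuclideanDomain.gcd_dvd_left (a * b) c
  have hright := EuclideanDomain.gcd_dvd_right (a * b) c
  refine associated_of_dvd_dvd (EuclideanDomain.dvd_gcd ?_ hright) (EuclideanDomain.dvd_gcd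
    ((EuclideanDomain.gcd_dvd_left b c).mul_left a) (EuclideanDomain.gcd_dvd_right b c))
  exact (h.of_isCoprime_of_dvd_right hright).symm.dvd_of_dvd_mul_left hleft

theorem natDegree_gcd_X_sub_C_eq_one_iff {K : Type*} [Field K] [DecidableEq K] {a : K}
    {P : K[X]} : (EuclideanDomain.gcd (X - C a) P).natDegree = 1 ↔ P.IsRoot a := by
  rw [← dvd_iff_isRoot]
  refine ⟨fun h ↦ ?_, fun h ↦ ?_⟩
  · refine ((irreducible_X_sub_C a).isCoprime_or_dvd P).resolve_left fun hcoprime ↦ ?_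
    have := natDegree_eq_zero_of_isUnit (EuclideanDomain.gcd_isUnit_iff.2 hcoprime)
    omega
  · rw [EuclideanDomain.gcd_eq_left.2 h, natDegree_X_sub_C]

end Gcd

section GeomSum

theorem coeff_geom_sum_X {R : Type*} [Semiring R] {i n : ℕ} (hi : i < n) :
    (∑ j ∈ Finset.range n, (X : R[X]) ^ j).coeff i = 1 := by
  simp [coeff_X_pow, hi]

theorem two_le_of_irreducible_geom_sum_X {R : Type*} [Semiring R] {n : ℕ}
    (h : Irreducible (∑ i ∈ Finset.range n, (X : R[X]) ^ i)) : 2 ≤ n := by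
  by_contra! hn
  interval_cases n <;> simp at h

end GeomSum

section KNormalPoly

variable {E : Type*} [Field E] {q n : ℕ} {α : E}

theorem coeff_kNormalPoly {i : ℕ} (hi : i < n) :
    (kNormalPoly q n α).coeff (n - 1 - i) = α ^ q ^ i := by
  rw [kNormalPoly, finsetSum_coeff, Finset.sum_eq_single_of_mem i (Finset.mem_range.2 hi),
    coeff_C_mul_X_pow, if_pos rfl]
  intro j hj hji
  rw [Finset.mem_range] at hj
  rw [coeff_C_mul_X_pow, if_neg (by omega)]

theorem natDegree_kNormalPoly_le : (kNormalPoly q n α).natDegree ≤ n - 1 :=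
  natDegree_sum_le_of_forall_le _ _ fun _ _ ↦
    (natDegree_C_mul_X_pow_le _ _).trans (Nat.sub_le _ _)

theorem eval_one_kNormalPoly :
    (kNormalPoly q n α).eval 1 = ∑ i ∈ Finset.range n, α ^ q ^ i := by
  simp [kNormalPoly, eval_finsetSum]

theorem pow_eq_self_of_geom_sum_X_dvd_kNormalPoly (hn : 2 ≤ n)
    (h : ∑ i ∈ Finset.range n, (X : E[X]) ^ i ∣ kNormalPoly q n α) : α ^ q = α := by
  have hdeg : (kNormalPoly q n α).natDegree ≤ (∑ i ∈ Finset.range n, (X : E[X]) ^ i).natDegree :=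
    natDegree_kNormalPoly_le.trans <| le_natDegree_of_ne_zero <| by
      rw [coeff_geom_sum_X (by omega)]
      exact one_ne_zero
  have hmul := eq_leadingCoeff_mul_of_monic_of_dvd_of_natDegree_le
    (monic_geom_sum_X (by omega)) h hdeg
  have hcoeff {i : ℕ} (hi : i < n) : α ^ q ^ i = (kNormalPoly q n α).leadingCoeff := by
    rw [← coeff_kNormalPoly hi, hmul, coeff_C_mul, coeff_geom_sum_X (by omega), mul_one, ← hmul]
  calc α ^ q = α ^ q ^ 1 := by rw [pow_one]
    _ = α ^ q ^ 0 := (hcoeff (by omega)).trans (hcoeff (by omega)).symm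
    _ = α := by rw [pow_zero, pow_one]

theorem one_normal_iff_trace_zero_prime_deg_general
    (hirr : Irreducible (∑ i ∈ Finset.range n, (X : E[X]) ^ i)) (hα : α ^ q ≠ α) :
    IsKNormal q n 1 α ↔ ∑ i ∈ Finset.range n, α ^ q ^ i = 0 := by
  let _ := Classical.decEq E
  have hcoprime : IsCoprime (∑ i ∈ Finset.range n, (X : E[X]) ^ i) (kNormalPoly q n α) :=
    hirr.coprime_iff_not_dvd.2 <|
      mt (pow_eq_self_of_geom_sum_X_dvd_kNormalPoly (two_le_of_irreducible_geom_sum_X hirr)) hα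
  have hgcd : Associated (EuclideanDomain.gcd (X ^ n - 1) (kNormalPoly q n α))
      (EuclideanDomain.gcd (X - C 1) (kNormalPoly q n α)) := by
    rw [← geom_sum_mul, ← C_1]
    exact associated_gcd_mul_left_of_isCoprime hcoprime
  calc IsKNormal q n 1 α
      ↔ (EuclideanDomain.gcd (X - C 1) (kNormalPoly q n α)).natDegree = 1 := by
        rw [IsKNormal, natDegree_eq_of_degree_eq (degree_eq_degree_of_associated hgcd)]
    _ ↔ (kNormalPoly q n α).IsRoot 1 := natDegree_gcd_X_sub_C_eq_one_iff
    _ ↔ ∑ i ∈ Finset.range n, α ^ q ^ i = 0 := by rw [IsRoot.def, eval_one_kNormalPoly]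

end KNormalPoly

/-- let `n` be a prime different from `p = char F_q`, `q` a primitive root
modulo `n`, and `α` a proper element of `F_{q^n}` over `F_q` (i.e. `α ∉ F_q`).  Then `α`
is a `1`-normal element of `F_{q^n}` over `F_q` iff `Tr_{q^n|q}(α) = 0`. -/
theorem one_normal_iff_trace_zero_prime_deg
    (F E : Type*) [Field F] [Fintype F] [Field E] [Fintype E] [Algebra F E]
    (n : ℕ) (hnprime : n.Prime) (hnp : n ≠ ringChar F)
    (hprimroot : orderOf ((Fintype.card F : ℕ) : ZMod n) = n - 1)
    (hrank : Module.finrank F E = n)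
    (α : E) (hproper : α ∉ (algebraMap F E).range) :
    IsKNormal (Fintype.card F) n 1 α ↔
      ∑ i ∈ Finset.range n, α ^ (Fintype.card F) ^ i = 0 := by
  have : Fact n.Prime := ⟨hnprime⟩
  exact one_normal_iff_trace_zero_prime_deg_general
    (irreducible_geom_sum_X_of_finrank_eq hprimroot hrank)
    (mt mem_range_algebraMap_iff_pow_card_eq.2 hproper)
end

section
/- Let q = p^m be a prime power with p prime, let n be a prime different from p, and suppose q is a primitive root modulo n. If there exists a primitive 1-normal element of F_{q^n} over F_q, then n ≥ 3, or n = 2 and q = 3. -/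
/-!
A `1`-normal `α` shares a root `r` of `X ^ n - 1` with its associated polynomial. For `n = 2` this
says `r ^ 2 = 1` and `α ^ q = -α r`, so `α ^ (2 (q - 1)) = 1`. A primitive `α` has order
`q ^ 2 - 1 = (q + 1) (q - 1)`, hence `q + 1 ∣ 2`, which is absurd. The exceptional pair
`n = 2`, `q = 3` of the theorem therefore never occurs.
-/

namespace IsPrimitiveElem

variable {E : Type*} [Field E] {α : E}

-- Since `0 ^ 0 = 1`, the element `0` of `𝔽₂` is primitive.
theorem ne_zero [Nontrivial Eˣ] (hα : IsPrimitiveElem α) : α ≠ 0 := by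
  rintro rfl
  obtain ⟨u, hu⟩ := exists_ne (1 : Eˣ)
  obtain ⟨k, hk⟩ := hα u u.ne_zero
  rcases eq_or_ne k 0 with rfl | hk0
  · exact hu (Units.ext (by rw [← hk, pow_zero, Units.val_one]))
  · exact u.ne_zero (by rw [← hk, zero_pow hk0])

theorem orderOf_eq [Nontrivial Eˣ] (hα : IsPrimitiveElem α) : orderOf α = Nat.card E - 1 := by
  lift α to Eˣ using hα.ne_zero.isUnit
  rw [orderOf_units, ← Nat.card_units]
  refine orderOf_eq_card_of_forall_mem_zpowers fun u ↦ ?_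
  obtain ⟨k, hk⟩ := hα u u.ne_zero
  exact ⟨k, Units.ext (by simpa using hk)⟩

end IsPrimitiveElem

theorem eval_kNormalPoly {E : Type*} [Field E] (q n : ℕ) (α r : E) :
    (kNormalPoly q n α).eval r = ∑ i ∈ Finset.range n, α ^ q ^ i * r ^ (n - 1 - i) := by
  simp [kNormalPoly, Polynomial.eval_finsetSum]

namespace IsKNormal

variable {E : Type*} [Field E] {q n : ℕ} {α : E}

theorem exists_pow_eq_one_and_isRoot (hα : IsKNormal q n 1 α) :
    ∃ r : E, r ^ n = 1 ∧ (kNormalPoly q n α).IsRoot r := by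
  let := Classical.decEq E
  obtain ⟨r, hr⟩ := Polynomial.exists_root_of_degree_eq_one
    ((Polynomial.degree_eq_iff_natDegree_eq_of_pos one_pos).mpr hα)
  have hr_pow : (Polynomial.X ^ n - 1 : Polynomial E).IsRoot r :=
    hr.dvd (EuclideanDomain.gcd_dvd_left _ _)
  refine ⟨r, ?_, hr.dvd (EuclideanDomain.gcd_dvd_right _ _)⟩
  simpa [sub_eq_zero] using hr_pow

theorem pow_sq_eq_sq (hα : IsKNormal q 2 1 α) : (α ^ q) ^ 2 = α ^ 2 := by
  obtain ⟨r, hr, hroot⟩ := hα.exists_pow_eq_one_and_isRoot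
  have hsum : α * r + α ^ q = 0 := by
    simpa [Polynomial.IsRoot, eval_kNormalPoly, Finset.sum_range_succ] using hroot
  calc (α ^ q) ^ 2 = (-(α * r)) ^ 2 := by rw [eq_neg_of_add_eq_zero_right hsum]
    _ = α ^ 2 := by rw [neg_sq, mul_pow, hr, mul_one]

theorem pow_two_mul_sub_one_eq_one (hα : IsKNormal q 2 1 α) (hα0 : α ≠ 0) (hq : q ≠ 0) :
    α ^ (2 * (q - 1)) = 1 := by
  refine mul_left_cancel₀ (pow_ne_zero 2 hα0) ?_
  calc α ^ 2 * α ^ (2 * (q - 1)) = (α ^ q) ^ 2 := by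
        rw [← pow_add, ← pow_mul]
        congr 1
        omega
    _ = α ^ 2 * 1 := by rw [hα.pow_sq_eq_sq, mul_one]

end IsKNormal

theorem IsPrimitiveElem.not_isKNormal_two_one {E : Type*} [Field E] {q : ℕ} {α : E} (hq : 1 < q)
    (hcard : Nat.card E = q ^ 2) (hα : IsPrimitiveElem α) : ¬ IsKNormal q 2 1 α := by
  intro hnormal
  have hunits : Nat.card Eˣ = (q + 1) * (q - 1) := by
    rw [Nat.card_units, hcard, ← Nat.sq_sub_sq, one_pow]
  have : Nontrivial Eˣ := by
    have hlt : 1 < Nat.card Eˣ := by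
      rw [hunits]
      exact Nat.one_lt_mul_iff.mpr (by omega)
    have : Finite Eˣ := Nat.finite_of_card_ne_zero (by omega)
    exact Finite.one_lt_card_iff_nontrivial.mp hlt
  have hdvd : (q + 1) * (q - 1) ∣ 2 * (q - 1) := by
    rw [← hunits, Nat.card_units, ← hα.orderOf_eq]
    exact orderOf_dvd_of_pow_eq_one
      (hnormal.pow_two_mul_sub_one_eq_one hα.ne_zero (by omega))
  have hle : q + 1 ≤ 2 := Nat.le_of_dvd two_pos (Nat.dvd_of_mul_dvd_mul_right (by omega) hdvd)
  omega

theorem primitive_one_normal_necessary_general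
    (F E : Type*) [Field F] [Fintype F] [Field E] [Algebra F E]
    (n : ℕ) (hn : 1 < n) (hrank : Module.finrank F E = n)
    (h : ∃ α : E, IsPrimitiveElem α ∧ IsKNormal (Fintype.card F) n 1 α) :
    3 ≤ n := by
  obtain ⟨α, hprim, hnormal⟩ := h
  by_contra! hlt
  obtain rfl : n = 2 := by omega
  have : Module.Finite F E := Module.finite_of_finrank_pos (by omega)
  have hcard : Nat.card E = Fintype.card F ^ 2 := by
    rw [Module.natCard_eq_pow_finrank (K := F), hrank, Nat.card_eq_fintype_card]
  exact hprim.not_isKNormal_two_one Fintype.one_lt_card hcard hnormal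

/-- let `n` be a prime different from `p = char F_q` and `q` a primitive
root modulo `n`.  If there exists a primitive `1`-normal element of `F_{q^n}` over
`F_q`, then `n ≥ 3`, or `n = 2` and `q = 3`. -/
theorem primitive_one_normal_necessary
    (F E : Type*) [Field F] [Fintype F] [Field E] [Fintype E] [Algebra F E]
    (n : ℕ) (hnprime : n.Prime) (hnp : n ≠ ringChar F)
    (hprimroot : orderOf ((Fintype.card F : ℕ) : ZMod n) = n - 1)
    (hrank : Module.finrank F E = n)
    (h : ∃ α : E, IsPrimitiveElem α ∧ IsKNormal (Fintype.card F) n 1 α) :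
    3 ≤ n ∨ (n = 2 ∧ Fintype.card F = 3) := by
  exact Or.inl (primitive_one_normal_necessary_general F E n hnprime.one_lt hrank h)
end

section
/- Let q be an odd prime power with q ≠ 3. Then there exists no primitive 1-normal element of F_{q^2} over F_q. -/
/-!
A `1`-normal element `α` of degree two satisfies `α ^ q = -r * α` for a common root `r` of
`X ^ 2 - 1` and `α X + α ^ q`. Since `r ^ 2 = 1`, squaring gives `α ^ (2 * q) = α ^ 2`. For a
primitive `α` this forces `q ^ 2 - 1 = (q + 1) * (q - 1)` to divide `2 * (q - 1)`, which is
impossible as soon as `q > 1`.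
-/

open Polynomial

section Field

variable {E : Type*} [Field E] {α : E}

theorem kNormalPoly_two (q : ℕ) (α : E) : kNormalPoly q 2 α = C α * X + C (α ^ q) := by
  simp [kNormalPoly, Finset.sum_range_succ]

theorem IsKNormal.exists_common_root {q n : ℕ} (h : IsKNormal q n 1 α) :
    ∃ r : E, r ^ n = 1 ∧ (kNormalPoly q n α).IsRoot r := by
  classical
  unfold IsKNormal at h
  obtain ⟨r, hr⟩ := exists_root_of_degree_eq_one
    ((degree_eq_iff_natDegree_eq_of_pos one_pos).2 h)
  have hr_left : (X ^ n - 1 : E[X]).IsRoot r := hr.dvd (EuclideanDomain.gcd_dvd_left _ _)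
  refine ⟨r, ?_, hr.dvd (EuclideanDomain.gcd_dvd_right _ _)⟩
  simpa [sub_eq_zero] using hr_left

theorem IsKNormal.pow_two_mul_eq_sq {q : ℕ} (h : IsKNormal q 2 1 α) :
    α ^ (2 * q) = α ^ 2 := by
  obtain ⟨r, hr, hroot⟩ := h.exists_common_root
  have hαq : α ^ q = -(α * r) := by
    simpa [kNormalPoly_two, add_eq_zero_iff_eq_neg'] using hroot
  calc α ^ (2 * q) = (α ^ q) ^ 2 := pow_mul' α 2 q
    _ = α ^ 2 * r ^ 2 := by rw [hαq, neg_sq, mul_pow]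
    _ = α ^ 2 := by rw [hr, mul_one]

theorem IsPrimitiveElem.modEq_of_pow_eq_pow [Finite E] (hα : IsPrimitiveElem α) {m n : ℕ}
    (h : α ^ m = α ^ n) : m ≡ n [MOD Nat.card E - 1] := by
  obtain ⟨g, hg⟩ := IsCyclic.exists_ofOrder_eq_natCard (α := Eˣ)
  obtain ⟨k, hk⟩ := hα g g.ne_zero
  have hpow : g ^ m = g ^ n := by
    ext
    push_cast
    rw [← hk, pow_right_comm, h, pow_right_comm]
  rwa [pow_eq_pow_iff_modEq, hg, Nat.card_units] at hpow

end Field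

theorem not_sq_sub_one_dvd_two_mul_sub_two {q : ℕ} (hq : 1 < q) : ¬ q ^ 2 - 1 ∣ 2 * q - 2 := by
  intro h
  have hle : q ^ 2 - 1 ≤ 2 * q - 2 := Nat.le_of_dvd (by omega) h
  have hlt : 2 * q ≤ q ^ 2 := by nlinarith
  omega

theorem no_primitive_one_normal_deg_two_general
    (F E : Type*) [Field F] [Fintype F] [Field E] [Algebra F E]
    (hrank : Module.finrank F E = 2) :
    ¬ ∃ α : E, IsPrimitiveElem α ∧ IsKNormal (Fintype.card F) 2 1 α := by
  rintro ⟨α, hprim, hnorm⟩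
  have : Module.Finite F E := Module.finite_of_finrank_eq_succ hrank
  have : Finite E := Module.finite_of_finite F
  have hcard : Nat.card E = Fintype.card F ^ 2 := by
    rw [Module.natCard_eq_pow_finrank (K := F), hrank, Nat.card_eq_fintype_card]
  have hq : 1 < Fintype.card F := Fintype.one_lt_card
  have hmod : 2 ≡ 2 * Fintype.card F [MOD Fintype.card F ^ 2 - 1] :=
    hcard ▸ hprim.modEq_of_pow_eq_pow hnorm.pow_two_mul_eq_sq.symm
  exact not_sq_sub_one_dvd_two_mul_sub_two hq ((Nat.modEq_iff_dvd' (by omega)).1 hmod)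

/-- let `q` be an odd prime power with `q ≠ 3`.  Then there is no
primitive `1`-normal element of `F_{q²}` over `F_q`. -/
theorem no_primitive_one_normal_deg_two
    (F E : Type*) [Field F] [Fintype F] [Field E] [Fintype E] [Algebra F E]
    (hodd : Odd (Fintype.card F)) (hq3 : Fintype.card F ≠ 3)
    (hrank : Module.finrank F E = 2) :
    ¬ ∃ α : E, IsPrimitiveElem α ∧ IsKNormal (Fintype.card F) 2 1 α :=
  no_primitive_one_normal_deg_two_general F E hrank
end

section
/- Let δ ∈ F_{2^m}^*, let n be an even positive integer, and let F_1(x) = Σ_{i=0}^{n} c_i x^i be a 1-normal polynomial (N₁-polynomial) of degree n over F_{2^m} such that Tr_{2^m|2}(c_1 δ / c_0) = 1 and Tr_{2^m|2}(c_{n-1} / δ) = 1. Define the sequence (F_u(x))_{u ≥ 1} by F_{u+1}(x) = x^{n·2^{u-1}} F_u(x + δ² x^{-1}) for u ≥ 1, i.e., F_{u+1}(X) = Σ_{i=0}^{n·2^{u-1}} c_i^{(u)} X^{n·2^{u-1} − i} (X² + δ²)^i where F_u(X) = Σ_i c_i^{(u)} X^i. Then for every u ≥ 1, F_u(x) is a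 1-normal polynomial of degree 2^{u-1} n over F_{2^m}. -/
/-!
A root `γ` of `F_{u+1}` satisfies `γ² + δ² = αγ` for a root `α` of `F_u`. The substitution `γ = αt`
turns this into the Artin–Schreier equation `t - t² = (δ/α)²`, which has no solution in `K(α)`
because the absolute trace of `δ/α` is that of `c₁δ/c₀`, namely `1`. So `γ` has degree `2` over
`K(α)` and `F_{u+1}` is irreducible.

With `N = deg F_u`, the map `x ↦ x^(q^N)` fixes `α` and exchanges the two roots `γ` and `α - γ` of
that quadratic. Consequently the conjugate polynomials satisfy `g_γ(x) = (x^N - 1) h(x) + g_α(x)`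
for some `h`. In characteristic `2`, `x^(2N) - 1 = (x^N - 1)²`, and `x^N - 1` is a `2^t`-th power
when `2^t ∣ N`. If `d = gcd(x^N - 1, g_α)` has degree less than `2^t`, then `d` cannot absorb the
full multiplicity of any irreducible factor of `x^N - 1`, so the gcd with `(x^N - 1)²` is no larger.

The step replaces `c₁δ/c₀` by `c_{N-1}/δ` and preserves `c_{N-1}`, so both trace conditions hold for
every `F_u`.
-/

/-- `P` is a `1`-normal polynomial (`N₁`-polynomial) of degree `N` over the finite field
`K` with `q` elements: `P` is monic, irreducible, of degree `N`, and each of its roots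
`α` (in an algebraic closure, where the field `F_{q^N}` generated by a root lives) is a
`1`-normal element, i.e. `deg (gcd (x^N - 1, Σ_{i=0}^{N-1} α^{q^i} x^{N-1-i})) = 1`. -/
def IsN1Poly (K : Type*) [Field K] [Fintype K] (N : ℕ) (P : Polynomial K) : Prop :=
  P.Monic ∧ Irreducible P ∧ P.natDegree = N ∧
    ∀ α : AlgebraicClosure K, Polynomial.aeval α P = 0 →
      (letI := Classical.decEq (AlgebraicClosure K)
      (EuclideanDomain.gcd ((Polynomial.X : Polynomial (AlgebraicClosure K)) ^ N - 1)
        (∑ i ∈ Finset.range N,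
          Polynomial.C (α ^ (Fintype.card K) ^ i) * Polynomial.X ^ (N - 1 - i))).natDegree = 1)

/-- For `P(x) = Σ_i c_i x^i` of degree `N` over a field `K` of characteristic 2 and `δ ∈ K*`,
the polynomial `x^N P(x + δ² x⁻¹)`, i.e. `Σ_{i=0}^{N} c_i X^{N-i} (X² + δ²)^i`. -/
noncomputable def stepPoly {K : Type*} [Field K] (δ : K) (N : ℕ) (P : Polynomial K) :
    Polynomial K :=
  ∑ i ∈ Finset.range (N + 1),
    Polynomial.C (P.coeff i) * Polynomial.X ^ (N - i) *
      ((Polynomial.X : Polynomial K) ^ 2 + Polynomial.C (δ ^ 2)) ^ i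

open Polynomial

section Gcd

theorem associated_gcd_mul_add {R : Type*} [EuclideanDomain R] [DecidableEq R]
    {a b g : R} (c : R) (hb : b ≠ 0) (hab : a ∣ b)
    (h : ∀ p, Prime p → p ∣ b → p * EuclideanDomain.gcd a g ∣ a) :
    Associated (EuclideanDomain.gcd b (a * c + g)) (EuclideanDomain.gcd a g) := by
  set d := EuclideanDomain.gcd a g
  have hda : d ∣ a := EuclideanDomain.gcd_dvd_left a g
  have hdg : d ∣ g := EuclideanDomain.gcd_dvd_right a g
  obtain ⟨e, he⟩ : d ∣ EuclideanDomain.gcd b (a * c + g) :=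
    EuclideanDomain.dvd_gcd (hda.trans hab) (dvd_add (hda.mul_right c) hdg)
  have hb' : d * e ∣ b := he ▸ EuclideanDomain.gcd_dvd_left _ _
  have hg' : d * e ∣ a * c + g := he ▸ EuclideanDomain.gcd_dvd_right _ _
  have hde : d * e ≠ 0 := ne_zero_of_dvd_ne_zero hb hb'
  suffices IsUnit e from he ▸ associated_mul_unit_left d e this
  by_contra he_unit
  obtain ⟨p, hp, hpe⟩ :=
    WfDvdMonoid.exists_irreducible_factor he_unit (right_ne_zero_of_mul hde)
  have hpa : p * d ∣ a := h p hp.prime ((hpe.mul_left d).trans hb')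
  have hpg : p * d ∣ g :=
    (dvd_add_right (hpa.mul_right c)).1 <| (mul_comm p d ▸ mul_dvd_mul_left d hpe).trans hg'
  have hpd : p * d ∣ 1 * d := (one_mul d).symm ▸ EuclideanDomain.dvd_gcd hpa hpg
  exact hp.not_isUnit <| isUnit_of_dvd_one <|
    (mul_dvd_mul_iff_right (left_ne_zero_of_mul hde)).1 hpd

variable {L : Type*} [Field L]

theorem dvd_pow_natDegree_of_dvd_pow {d f : L[X]} {r : ℕ} (hd : d ≠ 0) (h : d ∣ f ^ r) :
    d ∣ f ^ d.natDegree := by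
  induction d using WfDvdMonoid.induction_on_irreducible with
  | zero => exact absurd rfl hd
  | unit u hu => exact hu.dvd
  | mul e p he hp ih =>
    have hpf : p ∣ f := hp.prime.dvd_of_dvd_pow (dvd_of_mul_right_dvd h)
    rw [natDegree_mul hp.ne_zero he, pow_add]
    exact mul_dvd_mul (hpf.trans (dvd_pow_self f hp.natDegree_pos.ne'))
      (ih he (dvd_of_mul_left_dvd h))

theorem mul_dvd_pow_of_natDegree_lt {p d f : L[X]} {r : ℕ} (hp : p ∣ f) (hd : d ≠ 0)
    (h : d ∣ f ^ r) (hdeg : d.natDegree < r) : p * d ∣ f ^ r :=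
  calc
    p * d ∣ f * f ^ d.natDegree := mul_dvd_mul hp (dvd_pow_natDegree_of_dvd_pow hd h)
    _ = f ^ (d.natDegree + 1) := (pow_succ' f _).symm
    _ ∣ f ^ r := pow_dvd_pow f hdeg

theorem natDegree_gcd_X_pow_mul_sub_one [DecidableEq L] (p : ℕ) [Fact p.Prime] [CharP L p]
    {N t : ℕ} {g : L[X]} (c : L[X]) (hN : N ≠ 0) (ht : p ^ t ∣ N)
    (hg : (EuclideanDomain.gcd (X ^ N - 1) g).natDegree < p ^ t) :
    (EuclideanDomain.gcd (X ^ (p * N) - 1) ((X ^ N - 1) * c + g)).natDegree =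
      (EuclideanDomain.gcd (X ^ N - 1) g).natDegree := by
  have frobenius (M s : ℕ) : (X ^ (p ^ s * M) - 1 : L[X]) = (X ^ M - 1) ^ p ^ s := by
    rw [sub_pow_char_pow, one_pow, ← pow_mul, mul_comm M]
  have hne {M : ℕ} (hM : M ≠ 0) : (X ^ M - 1 : L[X]) ≠ 0 := (monic_X_pow_sub_C 1 hM).ne_zero
  have hpN : (X ^ (p * N) - 1 : L[X]) = (X ^ N - 1) ^ p := by simpa using frobenius N 1
  have hp := (Fact.out : p.Prime)
  refine natDegree_eq_of_degree_eq <| degree_eq_degree_of_associated <|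
    associated_gcd_mul_add c (hne (mul_ne_zero hp.ne_zero hN)) ?_ fun q hq hqN ↦ ?_
  · exact hpN ▸ dvd_pow_self _ hp.ne_zero
  obtain ⟨M, hM⟩ := ht
  have hqM : q ∣ X ^ M - 1 := by
    rw [hpN, hM, frobenius] at hqN
    exact hq.dvd_of_dvd_pow (hq.dvd_of_dvd_pow hqN)
  have hgcd := EuclideanDomain.gcd_dvd_left (X ^ N - 1) g
  have hgcd0 := ne_zero_of_dvd_ne_zero (hne hN) hgcd
  refine (mul_dvd_pow_of_natDegree_lt hqM hgcd0 ?_ hg).trans ?_ <;> rw [← frobenius, ← hM]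
  exact hgcd

end Gcd

section ConjugatePolynomial

variable {R : Type*} [CommRing R]

/-- The polynomial `Σ_{i=0}^{N-1} α^{q^i} x^{N-1-i}` of the conjugates of `α` over a field with `q`
elements; its gcd with `x^N - 1` measures how far `α` is from being a normal element. -/
noncomputable def conjPoly (q N : ℕ) (α : R) : R[X] :=
  ∑ i ∈ Finset.range N, C (α ^ q ^ i) * X ^ (N - 1 - i)

theorem conjPoly_add_left (q M N : ℕ) (α : R) :
    conjPoly q (M + N) α = X ^ N * conjPoly q M α + conjPoly q N (α ^ q ^ M) := by
  rw [conjPoly, Finset.sum_range_add, conjPoly, conjPoly, Finset.mul_sum]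
  congr 1 <;> refine Finset.sum_congr rfl fun i hi ↦ ?_
  · have hexp : M + N - 1 - i = N + (M - 1 - i) := by grind
    rw [hexp, pow_add]
    ring
  · have hexp : M + N - 1 - (M + i) = N - 1 - i := by omega
    rw [hexp, pow_add, pow_mul]

variable (K : Type*) [Field K] [Fintype K] [Algebra K R]

theorem frobeniusAlgHom_pow_apply (n : ℕ) (x : R) :
    (FiniteField.frobeniusAlgHom K R ^ n) x = x ^ Fintype.card K ^ n := by
  simp [FiniteField.coe_frobeniusAlgHom, pow_iterate]

theorem conjPoly_sub (N : ℕ) (α β : R) :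
    conjPoly (Fintype.card K) N (α - β) =
      conjPoly (Fintype.card K) N α - conjPoly (Fintype.card K) N β := by
  simp only [conjPoly, ← frobeniusAlgHom_pow_apply, map_sub, sub_mul, Finset.sum_sub_distrib]

theorem conjPoly_two_mul {N : ℕ} {α γ : R} (h : γ ^ Fintype.card K ^ N = α - γ) :
    conjPoly (Fintype.card K) (2 * N) γ =
      (X ^ N - 1) * conjPoly (Fintype.card K) N γ + conjPoly (Fintype.card K) N α := by
  rw [two_mul, conjPoly_add_left, h, conjPoly_sub]
  ring

end ConjugatePolynomial

/-- `P` is a `k`-normal polynomial of degree `N` over `K`: it is monic and irreducible, and the gcd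
of `x^N - 1` with the conjugate polynomial of each of its roots has degree `k`. Normal polynomials
are the case `k = 0` and `N₁`-polynomials the case `k = 1`. -/
def IsKNormalPoly (K : Type*) [Field K] [Fintype K] (k N : ℕ) (P : K[X]) : Prop :=
  P.Monic ∧ Irreducible P ∧ P.natDegree = N ∧
    ∀ α : AlgebraicClosure K, aeval α P = 0 →
      letI := Classical.decEq (AlgebraicClosure K)
      (EuclideanDomain.gcd (X ^ N - 1) (conjPoly (Fintype.card K) N α)).natDegree = k

theorem isKNormalPoly_one {K : Type*} [Field K] [Fintype K] {N : ℕ} {P : K[X]} :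
    IsKNormalPoly K 1 N P ↔ IsN1Poly K N P :=
  Iff.rfl

section StepPoly

variable {K : Type*} [Field K] (δ : K) (N : ℕ) (P : K[X])

theorem coeff_X_sq_add_C_pow_of_odd {R : Type*} [CommSemiring R] (a : R) (i : ℕ) {j : ℕ}
    (hj : Odd j) : (((X : R[X]) ^ 2 + C a) ^ i).coeff j = 0 := by
  have : ((X : R[X]) ^ 2 + C a) ^ i = expand R 2 ((X + C a) ^ i) := by simp
  rw [this, coeff_expand two_pos, if_neg hj.not_two_dvd_nat]

theorem stepPoly_succ : stepPoly δ (N + 1) P =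
    X * stepPoly δ N P + C (P.coeff (N + 1)) * (X ^ 2 + C (δ ^ 2)) ^ (N + 1) := by
  rw [stepPoly, Finset.sum_range_succ, stepPoly, Finset.mul_sum, Nat.sub_self, pow_zero, mul_one]
  congr 1
  refine Finset.sum_congr rfl fun i hi ↦ ?_
  rw [Nat.sub_add_comm (Finset.mem_range_succ_iff.1 hi), pow_succ]
  ring

theorem natDegree_stepPoly_le : (stepPoly δ N P).natDegree ≤ 2 * N := by
  induction N with
  | zero => simp [stepPoly]
  | succ N ih =>
    rw [stepPoly_succ]
    compute_degree
    omega

theorem coeff_stepPoly_two_mul : (stepPoly δ N P).coeff (2 * N) = P.coeff N := by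
  cases N with
  | zero => simp [stepPoly]
  | succ N =>
    have hdeg : (stepPoly δ N P).coeff (2 * N + 1) = 0 :=
      coeff_eq_zero_of_natDegree_lt (Nat.lt_succ_of_le (natDegree_stepPoly_le δ N P))
    have hlead : (((X : K[X]) ^ 2 + C (δ ^ 2)) ^ (N + 1)).coeff (2 * (N + 1)) = 1 := by
      rw [mul_comm, coeff_pow_of_natDegree_le (by compute_degree)]
      simp [-map_pow]
    rw [stepPoly_succ, coeff_add, coeff_C_mul, hlead, mul_add_one, coeff_X_mul, hdeg]
    simp

theorem coeff_stepPoly_zero : (stepPoly δ N P).coeff 0 = P.coeff N * δ ^ (2 * N) := by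
  cases N with
  | zero => simp [stepPoly]
  | succ N => simp [stepPoly_succ, coeff_zero_eq_eval_zero, ← pow_mul]

theorem coeff_stepPoly_one : (stepPoly δ (N + 1) P).coeff 1 = P.coeff N * δ ^ (2 * N) := by
  rw [stepPoly_succ, coeff_add, coeff_X_mul, coeff_stepPoly_zero, coeff_C_mul,
    coeff_X_sq_add_C_pow_of_odd _ _ odd_one, mul_zero, add_zero]

theorem coeff_stepPoly_two_mul_add_one :
    (stepPoly δ (N + 1) P).coeff (2 * N + 1) = P.coeff N := by
  rw [stepPoly_succ, coeff_add, coeff_X_mul, coeff_stepPoly_two_mul, coeff_C_mul,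
    coeff_X_sq_add_C_pow_of_odd _ _ (odd_two_mul_add_one N), mul_zero, add_zero]

variable {δ N P}

theorem natDegree_stepPoly (hP : P.coeff N ≠ 0) : (stepPoly δ N P).natDegree = 2 * N :=
  natDegree_eq_of_le_of_coeff_ne_zero (natDegree_stepPoly_le δ N P)
    ((coeff_stepPoly_two_mul δ N P).trans_ne hP)

theorem monic_stepPoly (hP : P.Monic) : (stepPoly δ P.natDegree P).Monic :=
  monic_of_natDegree_le_of_coeff_eq_one _ (natDegree_stepPoly_le δ _ P)
    ((coeff_stepPoly_two_mul δ _ P).trans hP)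

theorem nextCoeff_stepPoly (hP : P.natDegree ≠ 0) :
    (stepPoly δ P.natDegree P).nextCoeff = P.nextCoeff := by
  have hP0 : P.coeff P.natDegree ≠ 0 := leadingCoeff_ne_zero.2 <| ne_zero_of_natDegree_gt hP.bot_lt
  have hdeg := natDegree_stepPoly (δ := δ) hP0
  rw [nextCoeff_of_natDegree_pos (by omega), nextCoeff_of_natDegree_pos (by omega), hdeg]
  obtain ⟨N, hN⟩ := Nat.exists_eq_add_one_of_ne_zero hP
  rw [hN]
  exact coeff_stepPoly_two_mul_add_one δ N P

theorem coeff_one_stepPoly_mul_div_coeff_zero (hδ : δ ≠ 0) (hP : P.Monic) (hdeg : P.natDegree ≠ 0) :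
    (stepPoly δ P.natDegree P).coeff 1 * δ / (stepPoly δ P.natDegree P).coeff 0 =
      P.nextCoeff / δ := by
  rw [nextCoeff_of_natDegree_pos hdeg.bot_lt, coeff_stepPoly_zero, hP.coeff_natDegree]
  obtain ⟨N, hN⟩ := Nat.exists_eq_add_one_of_ne_zero hdeg
  rw [hN, coeff_stepPoly_one, Nat.add_sub_cancel]
  field_simp
  ring

variable {L : Type*} [Field L] [Algebra K L] {γ : L}

theorem aeval_stepPoly (hN : P.natDegree ≤ N) (hγ : γ ≠ 0) :
    aeval γ (stepPoly δ N P) = γ ^ N * aeval (γ + algebraMap K L δ ^ 2 / γ) P := by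
  rw [aeval_eq_sum_range' (Nat.lt_succ_of_le hN), stepPoly, map_sum, Finset.mul_sum]
  refine Finset.sum_congr rfl fun i hi ↦ ?_
  have hpow : γ ^ N = γ ^ (N - i) * γ ^ i :=
    (pow_sub_mul_pow γ (Finset.mem_range_succ_iff.1 hi)).symm
  have hquad : γ ^ 2 + algebraMap K L δ ^ 2 = γ * (γ + algebraMap K L δ ^ 2 / γ) := by
    field_simp
  simp only [map_mul, map_pow, map_add, aeval_C, aeval_X]
  rw [hpow, hquad, mul_pow, Algebra.smul_def]
  ring

theorem ne_zero_of_aeval_stepPoly_eq_zero (hδ : δ ≠ 0) (hP : P.coeff N ≠ 0)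
    (h : aeval γ (stepPoly δ N P) = 0) : γ ≠ 0 := by
  rintro rfl
  rw [← coeff_zero_eq_aeval_zero', coeff_stepPoly_zero] at h
  simp [hδ, hP] at h

theorem exists_root_of_aeval_stepPoly_eq_zero (hδ : δ ≠ 0) (hP : P ≠ 0)
    (h : aeval γ (stepPoly δ P.natDegree P) = 0) :
    ∃ α : L, aeval α P = 0 ∧ γ ^ 2 + algebraMap K L δ ^ 2 = α * γ := by
  have hγ : γ ≠ 0 := ne_zero_of_aeval_stepPoly_eq_zero hδ (leadingCoeff_ne_zero.2 hP) h
  rw [aeval_stepPoly le_rfl hγ, mul_eq_zero_iff_left (pow_ne_zero _ hγ)] at h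
  exact ⟨_, h, by field_simp⟩

end StepPoly

section Trace

theorem trace_pow_card (F E : Type*) [Field F] [Fintype F] [Field E] [Algebra F E]
    [Algebra.IsAlgebraic F E] (x : E) :
    Algebra.trace F E (x ^ Fintype.card F) = Algebra.trace F E x :=
  Algebra.trace_eq_of_algEquiv (FiniteField.frobeniusAlgEquivOfAlgebraic F E) x

theorem trace_div_eq_zero_of_sq_add_sq_eq_mul {E : Type*} [Field E] [Algebra (ZMod 2) E]
    [Algebra.IsAlgebraic (ZMod 2) E] {α γ d : E} (hα : α ≠ 0) (h : γ ^ 2 + d ^ 2 = α * γ) :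
    Algebra.trace (ZMod 2) E (d / α) = 0 := by
  have trace_sq (x : E) : Algebra.trace (ZMod 2) E (x ^ 2) = Algebra.trace (ZMod 2) E x := by
    simpa using trace_pow_card (ZMod 2) E x
  have artin_schreier : (d / α) ^ 2 = γ / α - (γ / α) ^ 2 := by
    field_simp
    linear_combination h
  rw [← trace_sq, artin_schreier, map_sub, trace_sq, sub_self]

theorem sum_pow_eq_one_iff_trace_eq_one {K : Type*} [Field K] [Fintype K] {p m : ℕ}
    [Fact p.Prime] [Algebra (ZMod p) K] (hcard : Fintype.card K = p ^ m) {a : K} :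
    ∑ i ∈ Finset.range m, a ^ p ^ i = 1 ↔ Algebra.trace (ZMod p) K a = 1 := by
  have hm : Module.finrank (ZMod p) K = m := by
    apply Nat.pow_right_injective (Fact.out : p.Prime).two_le
    simpa [hcard] using (Module.card_eq_pow_finrank (K := ZMod p) (V := K)).symm
  have htr : algebraMap (ZMod p) K (Algebra.trace (ZMod p) K a) =
      ∑ i ∈ Finset.range m, a ^ p ^ i := by
    simpa [hm] using FiniteField.algebraMap_trace_eq_sum_pow (ZMod p) K a
  rw [← htr]
  exact map_eq_one_iff (algebraMap (ZMod p) K) (algebraMap (ZMod p) K).injective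

open IntermediateField

variable {K L : Type*} [Field K] [Field L] [Algebra K L] {x : L}

theorem adjoin_simple_inv (x : L) : K⟮x⁻¹⟯ = K⟮x⟯ :=
  le_antisymm (adjoin_simple_le_iff.2 (inv_mem (mem_adjoin_simple_self K x)))
    (adjoin_simple_le_iff.2 (inv_mem_iff.1 (mem_adjoin_simple_self K x⁻¹)))

theorem natDegree_minpoly_inv (hx : IsIntegral K x) :
    (minpoly K x⁻¹).natDegree = (minpoly K x).natDegree := by
  rw [← adjoin.finrank hx.inv, adjoin_simple_inv, adjoin.finrank hx]

theorem minpoly_inv (hx : IsIntegral K x) (hx0 : x ≠ 0) :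
    minpoly K x⁻¹ = C ((minpoly K x).coeff 0)⁻¹ * (minpoly K x).reverse := by
  have h0 : (minpoly K x).coeff 0 ≠ 0 := minpoly.coeff_zero_ne_zero hx hx0
  have htrail : (minpoly K x).natTrailingDegree = 0 := natTrailingDegree_eq_zero.2 (.inr h0)
  have hmonic : (C ((minpoly K x).coeff 0)⁻¹ * (minpoly K x).reverse).Monic := by
    rw [Monic, leadingCoeff_mul, leadingCoeff_C, reverse_leadingCoeff, trailingCoeff, htrail,
      inv_mul_cancel₀ h0]
  have hroot : aeval x⁻¹ (C ((minpoly K x).coeff 0)⁻¹ * (minpoly K x).reverse) = 0 := by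
    let _ := invertibleOfNonzero hx0
    have := (eval₂_reverse_eq_zero_iff (algebraMap K L) x (minpoly K x)).2 (minpoly.aeval K x)
    rw [map_mul, aeval_def _ (reverse _), ← invOf_eq_inv, this, mul_zero]
  refine (eq_of_monic_of_dvd_of_natDegree_le (minpoly.monic hx.inv) hmonic
    (minpoly.dvd K _ hroot) ?_).symm
  rw [natDegree_C_mul (inv_ne_zero h0), reverse_natDegree, natDegree_minpoly_inv hx]
  exact Nat.sub_le _ _

theorem nextCoeff_minpoly_inv (hx : IsIntegral K x) (hx0 : x ≠ 0) :
    (minpoly K x⁻¹).nextCoeff = (minpoly K x).coeff 1 / (minpoly K x).coeff 0 := by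
  have hpos : 0 < (minpoly K x).natDegree := minpoly.natDegree_pos hx
  have hdeg := natDegree_minpoly_inv hx
  rw [nextCoeff_of_natDegree_pos (hdeg ▸ hpos), hdeg, minpoly_inv hx hx0, coeff_C_mul,
    coeff_reverse, revAt_le (Nat.sub_le _ _), Nat.sub_sub_self hpos, inv_mul_eq_div]

theorem trace_inv [FiniteDimensional K L] (hx : x ≠ 0) :
    Algebra.trace K L x⁻¹ = Module.finrank K⟮x⟯ L *
      -((minpoly K x).coeff 1 / (minpoly K x).coeff 0) := by
  rw [trace_eq_finrank_mul_minpoly_nextCoeff, adjoin_simple_inv,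
    nextCoeff_minpoly_inv (.of_finite K x) hx]

theorem trace_algebraMap_div (F : Type*) [Field F] [Algebra F K] [Algebra F L]
    [IsScalarTower F K L] [FiniteDimensional F K] [FiniteDimensional K L] (hx : x ≠ 0)
    (hdeg : (minpoly K x).natDegree = Module.finrank K L) (a : K) :
    Algebra.trace F L (algebraMap K L a / x) =
      -Algebra.trace F K ((minpoly K x).coeff 1 * a / (minpoly K x).coeff 0) := by
  have hfin : Module.finrank K⟮x⟯ L = 1 := by
    rw [(Field.primitive_element_iff_minpoly_natDegree_eq K x).2 hdeg,
      IntermediateField.finrank_top]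
  have htr : Algebra.trace K L x⁻¹ = -((minpoly K x).coeff 1 / (minpoly K x).coeff 0) := by
    rw [trace_inv hx, hfin, Nat.cast_one, one_mul]
  rw [← Algebra.trace_trace (S := K), div_eq_mul_inv, ← Algebra.smul_def, map_smul, htr, ← map_neg,
    smul_eq_mul]
  ring_nf

end Trace

section Irreducible

variable {K E : Type*} [Field K] [Finite K] [Algebra (ZMod 2) K] [Field E] [Algebra K E]
  [FiniteDimensional K E] [Algebra (ZMod 2) E] [IsScalarTower (ZMod 2) K E] {δ : K}

theorem sq_add_sq_ne_mul_of_trace_eq_one {α : E}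
    (hdeg : (minpoly K α).natDegree = Module.finrank K E)
    (htr : Algebra.trace (ZMod 2) K
      ((minpoly K α).coeff 1 * δ / (minpoly K α).coeff 0) = 1) (γ : E) :
    γ ^ 2 + algebraMap K E δ ^ 2 ≠ α * γ := by
  intro h
  have : Finite E := Module.finite_of_finite K
  have : Module.Finite (ZMod 2) E := .of_finite
  have : Module.Finite (ZMod 2) K := .of_finite
  have hα : α ≠ 0 := by
    rintro rfl
    simp at htr
  have htr_div := trace_algebraMap_div (ZMod 2) hα hdeg δ
  rw [trace_div_eq_zero_of_sq_add_sq_eq_mul hα h, htr] at htr_div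
  exact neg_ne_zero.2 one_ne_zero htr_div.symm

theorem finrank_eq_two_mul_natDegree {P : K[X]} (hδ : δ ≠ 0) (hP : P.Monic) (hirr : Irreducible P)
    (htr : Algebra.trace (ZMod 2) K (P.coeff 1 * δ / P.coeff 0) = 1) {γ : E}
    (hγ : aeval γ (stepPoly δ P.natDegree P) = 0)
    (hle : Module.finrank K E ≤ 2 * P.natDegree) :
    Module.finrank K E = 2 * P.natDegree := by
  obtain ⟨α, hα, hγα⟩ := exists_root_of_aeval_stepPoly_eq_zero hδ hP.ne_zero hγ
  have hmin : P = minpoly K α := minpoly.eq_of_irreducible_of_monic hirr hα hP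
  have hne : P.natDegree ≠ Module.finrank K E := fun h ↦
    sq_add_sq_ne_mul_of_trace_eq_one (hmin ▸ h) (hmin ▸ htr) γ hγα
  obtain ⟨c, hc⟩ : P.natDegree ∣ Module.finrank K E :=
    hmin ▸ minpoly.degree_dvd (.of_finite K α)
  have hpos : 0 < Module.finrank K E := Module.finrank_pos
  have hc0 : c ≠ 0 := by grind
  have hc1 : c ≠ 1 := by grind
  have hc2 : c ≤ 2 := by nlinarith [hirr.natDegree_pos]
  grind

theorem irreducible_stepPoly {P : K[X]} (hδ : δ ≠ 0) (hP : P.Monic) (hirr : Irreducible P)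
    (htr : Algebra.trace (ZMod 2) K (P.coeff 1 * δ / P.coeff 0) = 1) :
    Irreducible (stepPoly δ P.natDegree P) := by
  set S := stepPoly δ P.natDegree P
  have hS : S.Monic := monic_stepPoly hP
  have hSdeg : S.natDegree = 2 * P.natDegree :=
    natDegree_stepPoly (leadingCoeff_ne_zero.2 hP.ne_zero)
  have hSunit : ¬IsUnit S := not_isUnit_of_natDegree_pos S (by grind [hirr.natDegree_pos])
  obtain ⟨Q, hQ, hQS⟩ := WfDvdMonoid.exists_irreducible_factor hSunit hS.ne_zero
  have : Fact (Irreducible Q) := ⟨hQ⟩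
  have hfin : Module.finrank K (AdjoinRoot Q) = Q.natDegree :=
    (AdjoinRoot.powerBasis hQ.ne_zero).finrank
  have : FiniteDimensional K (AdjoinRoot Q) := (AdjoinRoot.powerBasis hQ.ne_zero).finite
  have hroot : aeval (AdjoinRoot.root Q) S = 0 := by
    rw [AdjoinRoot.aeval_eq, AdjoinRoot.mk_eq_zero]
    exact hQS
  have hQdeg : Q.natDegree = 2 * P.natDegree := hfin ▸
    finrank_eq_two_mul_natDegree hδ hP hirr htr hroot
      (hfin ▸ hSdeg ▸ natDegree_le_of_dvd hQS hS.ne_zero)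
  exact (associated_of_dvd_of_natDegree_le hQS hS.ne_zero (hSdeg.trans hQdeg.symm).le).irreducible
    hQ

end Irreducible

section Frobenius

theorem pow_card_pow_eq_self_iff {K L : Type*} [Field K] [Fintype K] [Field L] [Algebra K L]
    {x : L} (hx : IsIntegral K x) {n : ℕ} :
    x ^ Fintype.card K ^ n = x ↔ (minpoly K x).natDegree ∣ n := by
  rw [(minpoly.irreducible hx).natDegree_dvd_iff_dvd_X_pow_card_pow_sub_X, minpoly.dvd_iff]
  simp [sub_eq_zero]

theorem eq_sub_of_mul_sub_eq_mul_sub {R : Type*} [CommRing R] [IsDomain R] {x y a : R}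
    (h : x * (a - x) = y * (a - y)) (hxy : x ≠ y) : x = a - y := by
  have : (x - y) * (x - (a - y)) = 0 := by linear_combination -h
  exact sub_eq_zero.1 ((mul_eq_zero_iff_left (sub_ne_zero.2 hxy)).1 this)

theorem pow_card_pow_natDegree_eq_sub {K L : Type*} [Field K] [Fintype K] [Field L] [Algebra K L]
    {δ : K} {P : K[X]} {α γ : L}
    (hP : P.Monic) (hirr : Irreducible P) (hS : Irreducible (stepPoly δ P.natDegree P))
    (hα : aeval α P = 0) (hγ : aeval γ (stepPoly δ P.natDegree P) = 0)
    (hγα : γ ^ 2 + algebraMap K L δ ^ 2 = α * γ) :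
    γ ^ Fintype.card K ^ P.natDegree = α - γ := by
  have hSmonic := monic_stepPoly (δ := δ) hP
  have hαfix : α ^ Fintype.card K ^ P.natDegree = α := by
    rw [pow_card_pow_eq_self_iff ⟨P, hP, hα⟩, ← minpoly.eq_of_irreducible_of_monic hirr hα hP]
  have hγne : γ ^ Fintype.card K ^ P.natDegree ≠ γ := by
    rw [Ne, pow_card_pow_eq_self_iff ⟨_, hSmonic, hγ⟩,
      ← minpoly.eq_of_irreducible_of_monic hS hγ hSmonic,
      natDegree_stepPoly (leadingCoeff_ne_zero.2 hP.ne_zero)]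
    have hpos := hirr.natDegree_pos
    exact Nat.not_dvd_of_pos_of_lt hpos (by omega)
  let σ := FiniteField.frobeniusAlgHom K L ^ P.natDegree
  have hσ (x : L) : σ x = x ^ Fintype.card K ^ P.natDegree := frobeniusAlgHom_pow_apply K _ x
  have hconst : γ * (α - γ) = algebraMap K L (δ ^ 2) := by
    rw [map_pow]
    linear_combination -hγα
  have hσconst : σ γ * (α - σ γ) = algebraMap K L (δ ^ 2) := by
    simpa [hσ α, hαfix] using congrArg σ hconst
  rw [← hσ] at hγne ⊢
  exact eq_sub_of_mul_sub_eq_mul_sub (hσconst.trans hconst.symm) hγne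

end Frobenius

section KNormal

variable {K : Type*} [Field K] [Fintype K] [Algebra (ZMod 2) K] {δ : K} {P : K[X]} {k t N : ℕ}

theorem isKNormalPoly_stepPoly (hk : k < 2 ^ t) (ht : 2 ^ t ∣ N) (hδ : δ ≠ 0)
    (h : IsKNormalPoly K k N P)
    (htr : Algebra.trace (ZMod 2) K (P.coeff 1 * δ / P.coeff 0) = 1) :
    IsKNormalPoly K k (2 * N) (stepPoly δ N P) := by
  obtain ⟨hP, hirr, rfl, hnormal⟩ := h
  have hS := irreducible_stepPoly hδ hP hirr htr
  refine ⟨monic_stepPoly hP, hS, natDegree_stepPoly (leadingCoeff_ne_zero.2 hP.ne_zero), ?_⟩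
  intro γ hγ
  let _ := Classical.decEq (AlgebraicClosure K)
  have : CharP (AlgebraicClosure K) 2 :=
    (Algebra.charP_iff K _ 2).1 ((Algebra.charP_iff (ZMod 2) K 2).1 inferInstance)
  obtain ⟨α, hα, hγα⟩ := exists_root_of_aeval_stepPoly_eq_zero hδ hP.ne_zero hγ
  have hfrob := pow_card_pow_natDegree_eq_sub hP hirr hS hα hγ hγα
  rw [conjPoly_two_mul K hfrob, natDegree_gcd_X_pow_mul_sub_one 2 _ hirr.natDegree_pos.ne' ht]
  · exact hnormal α hα
  · exact (hnormal α hα).trans_lt hk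

end KNormal

theorem one_normal_polynomial_sequence_general (K : Type*) [Field K] [Fintype K] {m : ℕ}
    (hcard : Fintype.card K = 2 ^ m) {δ : K} (hδ : δ ≠ 0) {k t n : ℕ} (hk : k < 2 ^ t)
    (hn : 2 ^ t ∣ n) {F : ℕ → K[X]} (hF : IsKNormalPoly K k n (F 1))
    (htr₁ : ∑ i ∈ Finset.range m, ((F 1).coeff 1 * δ / (F 1).coeff 0) ^ 2 ^ i = 1)
    (htr₂ : ∑ i ∈ Finset.range m, ((F 1).coeff (n - 1) / δ) ^ 2 ^ i = 1)
    (hrec : ∀ u, 1 ≤ u → F (u + 1) = stepPoly δ (n * 2 ^ (u - 1)) (F u)) :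
    ∀ u, 1 ≤ u → IsKNormalPoly K k (2 ^ (u - 1) * n) (F u) := by
  have : CharP K 2 := charP_of_card_eq_prime_pow hcard
  let _ : Algebra (ZMod 2) K := ZMod.algebra K 2
  have hnext : (F 1).coeff (n - 1) = (F 1).nextCoeff := by
    obtain ⟨-, hirr, rfl, -⟩ := hF
    exact (nextCoeff_of_natDegree_pos hirr.natDegree_pos).symm
  rw [sum_pow_eq_one_iff_trace_eq_one hcard] at htr₁ htr₂
  suffices h : ∀ v, IsKNormalPoly K k (2 ^ v * n) (F (v + 1)) ∧
      Algebra.trace (ZMod 2) K ((F (v + 1)).coeff 1 * δ / (F (v + 1)).coeff 0) = 1 ∧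
      Algebra.trace (ZMod 2) K ((F (v + 1)).nextCoeff / δ) = 1 by
    rintro (_ | v) hu
    exacts [absurd hu (by simp), (h v).1]
  intro v
  induction v with
  | zero => exact ⟨by simpa using hF, htr₁, hnext ▸ htr₂⟩
  | succ v ih =>
    obtain ⟨hnormal, h₁, h₂⟩ := ih
    have hnormal' := isKNormalPoly_stepPoly hk (hn.mul_left _) hδ hnormal h₁
    obtain ⟨hmonic, hirr, hdeg, -⟩ := hnormal
    have hpos := hirr.natDegree_pos.ne'
    rw [hrec (v + 1) v.succ_pos, Nat.add_sub_cancel, mul_comm n]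
    refine ⟨by rwa [pow_succ', mul_assoc], ?_, ?_⟩ <;> rw [← hdeg]
    · rwa [coeff_one_stepPoly_mul_div_coeff_zero hδ hmonic hpos]
    · rwa [nextCoeff_stepPoly hpos]

/-- let `δ ∈ F_{2^m}*`, `n` an even positive integer, and
`F₁(x) = Σ_{i=0}^n c_i x^i` an `N₁`-polynomial of degree `n` over `F_{2^m}` with
`Tr_{2^m|2}(c₁δ/c₀) = 1` and `Tr_{2^m|2}(c_{n-1}/δ) = 1`.  Define
`F_{u+1}(x) = x^{n·2^{u-1}} F_u(x + δ² x⁻¹)` for `u ≥ 1`.  Then for every `u ≥ 1`,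
`F_u` is an `N₁`-polynomial of degree `2^{u-1} n` over `F_{2^m}`. -/
theorem one_normal_polynomial_sequence
    (K : Type*) [Field K] [Fintype K] (m : ℕ) (hm : 0 < m)
    (hcard : Fintype.card K = 2 ^ m)
    (δ : K) (hδ : δ ≠ 0) (n : ℕ) (hn : 0 < n) (hneven : Even n)
    (Fseq : ℕ → Polynomial K)
    (hF1 : IsN1Poly K n (Fseq 1))
    (htr1 : ∑ i ∈ Finset.range m, ((Fseq 1).coeff 1 * δ / (Fseq 1).coeff 0) ^ 2 ^ i = 1)
    (htr2 : ∑ i ∈ Finset.range m, ((Fseq 1).coeff (n - 1) / δ) ^ 2 ^ i = 1)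
    (hrec : ∀ u : ℕ, 1 ≤ u → Fseq (u + 1) = stepPoly δ (n * 2 ^ (u - 1)) (Fseq u)) :
    ∀ u : ℕ, 1 ≤ u → IsN1Poly K (2 ^ (u - 1) * n) (Fseq u) := by
  exact fun u hu ↦ isKNormalPoly_one.1 <| one_normal_polynomial_sequence_general K hcard hδ
    (t := 1) one_lt_two (by simpa using hneven.two_dvd) (isKNormalPoly_one.2 hF1) htr1 htr2 hrec
    u hu
end
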